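/- Let X ∈ Sⁿ with distinct eigenvalues μ₁ > … > μ_r and index blocks α₁,…,α_r, fix m ∈ {1,…,r}, and let i = min α_m (so that either i = 1 or λ_{i−1}(X) > λᵢ(X), i.e., λᵢ is a leading eigenvalue at X). Then the i-th largest eigenvalue function λᵢ : Sⁿ → ℝ is twice epi-differentiable at X for every Y ∈ ∂λᵢ(X), and for every H ∈ Sⁿ, d²λᵢ(X,Y)(H) = δ_{C_{λᵢ}(X,Y)}(H) + 2·⟨Y, H·(μ_m·I − X)^†·H⟩, where δ_C denotes the indicator function of C (equal to 0 on C and +∞ elsewhere). -/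

import Mathlib

open Filter Topology Matrix

noncomputable section

namespace SpecPaper

/-! ## Generic variational analysis definitions over a topological real vector space -/

variable {E : Type*}

section Generic

variable [AddCommGroup E] [Module ℝ E] [TopologicalSpace E]

/-- `f x` is finite (neither `+∞` nor `-∞`). -/
def IsFiniteAt (f : E → EReal) (x : E) : Prop :=
  f x ≠ ⊤ ∧ f x ≠ ⊥

/-- The norm induced by a given inner product. -/
noncomputable def nrm (ip : E → E → ℝ) (x : E) : ℝ :=
  Real.sqrt (ip x x)

/-- The subderivative `df(x)(w)`. -/
noncomputable def subderiv (f : E → EReal) (x w : E) : EReal :=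
  Filter.liminf (fun p : ℝ × E => (((p.1)⁻¹ : ℝ) : EReal) * (f (x + p.1 • p.2) - f x))
    ((nhdsWithin (0 : ℝ) (Set.Ioi 0)) ×ˢ nhds w)

/-- The second-order difference quotient `Δ²ₜ f(x,v)(w)`. -/
noncomputable def sdq2 (ip : E → E → ℝ) (f : E → EReal) (x v : E) (t : ℝ) (w : E) : EReal :=
  (((2 / t ^ 2) : ℝ) : EReal) * (f (x + t • w) - f x - ((t * ip v w : ℝ) : EReal))

/-- The second subderivative `d²f(x,v)(w)`. -/
noncomputable def subderiv2 (ip : E → E → ℝ) (f : E → EReal) (x v w : E) : EReal :=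
  Filter.liminf (fun p : ℝ × E => sdq2 ip f x v p.1 p.2)
    ((nhdsWithin (0 : ℝ) (Set.Ioi 0)) ×ˢ nhds w)

/-- Twice epi-differentiability of `f` at `x` for `v`. -/
def TwiceEpiDiff (ip : E → E → ℝ) (f : E → EReal) (x v : E) : Prop :=
  IsFiniteAt f x ∧
    ∀ t : ℕ → ℝ, (∀ k, 0 < t k) → Tendsto t atTop (nhds 0) →
      ∀ w : E, ∃ ws : ℕ → E, Tendsto ws atTop (nhds w) ∧
        Tendsto (fun k => sdq2 ip f x v (t k) (ws k)) atTop (nhds (subderiv2 ip f x v w))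

/-- `v` is a regular subgradient of `f` at `x`. -/
def RegSubgrad (ip : E → E → ℝ) (f : E → EReal) (x v : E) : Prop :=
  IsFiniteAt f x ∧
    (0 : EReal) ≤ Filter.liminf
      (fun y : E =>
        (((nrm ip (y - x))⁻¹ : ℝ) : EReal) * (f y - f x - ((ip v (y - x) : ℝ) : EReal)))
      (nhdsWithin x {x}ᶜ)

/-- `v` is a (limiting) subgradient of `f` at `x`. -/
def LimSubgrad (ip : E → E → ℝ) (f : E → EReal) (x v : E) : Prop :=
  ∃ xs vs : ℕ → E, (∀ k, RegSubgrad ip f (xs k) (vs k)) ∧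
    Tendsto xs atTop (nhds x) ∧ Tendsto vs atTop (nhds v) ∧
    Tendsto (fun k => f (xs k)) atTop (nhds (f x))

/-- The tangent cone to `C` at `x`. -/
def tangentCone (C : Set E) (x : E) : Set E :=
  {w | ∃ (t : ℕ → ℝ) (ws : ℕ → E), (∀ k, 0 < t k) ∧ Tendsto t atTop (nhds 0) ∧
    Tendsto ws atTop (nhds w) ∧ ∀ k, x + t k • ws k ∈ C}

/-- The regular normal cone to `C` at `x`. -/
def regNormalCone (ip : E → E → ℝ) (C : Set E) (x : E) : Set E :=
  {v | ∀ w ∈ tangentCone C x, ip v w ≤ 0}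

/-- The limiting normal cone to `C` at `x`. -/
def limNormalCone (ip : E → E → ℝ) (C : Set E) (x : E) : Set E :=
  {v | ∃ xs vs : ℕ → E, (∀ k, xs k ∈ C) ∧ (∀ k, vs k ∈ regNormalCone ip C (xs k)) ∧
    Tendsto xs atTop (nhds x) ∧ Tendsto vs atTop (nhds v)}

/-- The critical cone `C_f(x,v)`. -/
def criticalCone (ip : E → E → ℝ) (f : E → EReal) (x v : E) : Set E :=
  {w | subderiv f x w = ((ip v w : ℝ) : EReal)}

/-- `f` is locally Lipschitz continuous at `x` relative to its domain. -/
def LocLipAtRelDom (ip : E → E → ℝ) (f : E → EReal) (x : E) : Prop :=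
  IsFiniteAt f x ∧
    ∃ V ∈ nhds x, ∃ ℓ : ℝ, 0 ≤ ℓ ∧
      ∀ a ∈ V, ∀ b ∈ V, f a ≠ ⊤ → f b ≠ ⊤ →
        f a ≠ ⊥ ∧ f b ≠ ⊥ ∧ |(f a).toReal - (f b).toReal| ≤ ℓ * nrm ip (a - b)

/-- `f` is locally Lipschitz continuous relative to its domain. -/
def LocLipRelDom (ip : E → E → ℝ) (f : E → EReal) : Prop :=
  ∀ x : E, f x ≠ ⊤ → LocLipAtRelDom ip f x

/-- `v` is a proximal subgradient of `f` at `x`. -/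
def ProxSubgrad (ip : E → E → ℝ) (f : E → EReal) (x v : E) : Prop :=
  IsFiniteAt f x ∧
    ∃ r > (0 : ℝ), ∃ ε > (0 : ℝ), ∀ x' : E, nrm ip (x' - x) ≤ ε →
      f x + ((ip v (x' - x) - r / 2 * ip (x' - x) (x' - x) : ℝ) : EReal) ≤ f x'

/-- `f` is prox-regular at `x` for `v`. -/
def ProxRegularAtFor (ip : E → E → ℝ) (f : E → EReal) (x v : E) : Prop :=
  IsFiniteAt f x ∧
    (∃ δ > (0 : ℝ), LowerSemicontinuousOn f {x' | nrm ip (x' - x) < δ}) ∧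
    ∃ ε > (0 : ℝ), ∃ r : ℝ, 0 ≤ r ∧
      ∀ x₁ v₁ : E, LimSubgrad ip f x₁ v₁ → nrm ip (x₁ - x) < ε → nrm ip (v₁ - v) < ε →
        f x₁ < f x + (ε : EReal) →
        ∀ x' : E, nrm ip (x' - x) < ε →
          f x₁ + ((ip v₁ (x' - x₁) - r / 2 * ip (x' - x₁) (x' - x₁) : ℝ) : EReal) ≤ f x'

/-- `f` is prox-regular at `x` (for every subgradient). -/
def ProxRegularAt (ip : E → E → ℝ) (f : E → EReal) (x : E) : Prop :=
  ∀ v : E, LimSubgrad ip f x v → ProxRegularAtFor ip f x v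

/-- `f` is subdifferentially continuous at `x`. -/
def SubdiffContAt (ip : E → E → ℝ) (f : E → EReal) (x : E) : Prop :=
  ∀ v : E, LimSubgrad ip f x v →
    ∀ xs vs : ℕ → E, (∀ k, LimSubgrad ip f (xs k) (vs k)) →
      Tendsto xs atTop (nhds x) → Tendsto vs atTop (nhds v) →
      Tendsto (fun k => f (xs k)) atTop (nhds (f x))

/-- `f` is prox-bounded. -/
def ProxBounded (ip : E → E → ℝ) (f : E → EReal) : Prop :=
  ∃ α c : ℝ, ∀ x : E, (c : EReal) ≤ f x + ((α * ip x x : ℝ) : EReal)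

/-- The proximal mapping (as a set of minimizers). -/
def proxSet (ip : E → E → ℝ) (f : E → EReal) (γ : ℝ) (x : E) : Set E :=
  {w | ∀ w' : E,
    f w + ((1 / (2 * γ) * ip (w - x) (w - x) : ℝ) : EReal) ≤
      f w' + ((1 / (2 * γ) * ip (w' - x) (w' - x) : ℝ) : EReal)}

/-- The proximal map of `f` with parameter `γ` is single-valued around `z` and the resulting
map is directionally differentiable at `z`. -/
def ProxSingleDirDiff (ip : E → E → ℝ) (f : E → EReal) (γ : ℝ) (z : E) : Prop :=
  ∃ V ∈ nhds z, ∃ P : E → E, (∀ u ∈ V, proxSet ip f γ u = {P u}) ∧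
    ∀ h : E, ∃ L : E,
      Tendsto (fun t : ℝ => t⁻¹ • (P (z + t • h) - P z)) (nhdsWithin 0 (Set.Ioi 0)) (nhds L)

/-- The parabolic difference quotient. -/
noncomputable def parabQuot (f : E → EReal) (x w : E) (t : ℝ) (z : E) : EReal :=
  (((2 / t ^ 2) : ℝ) : EReal) *
    (f (x + t • w + (t ^ 2 / 2) • z) - f x - ((t * (subderiv f x w).toReal : ℝ) : EReal))

/-- The parabolic subderivative `d²f(x)(w | z)`. -/
noncomputable def parabSubderiv (f : E → EReal) (x w z : E) : EReal :=
  Filter.liminf (fun p : ℝ × E => parabQuot f x w p.1 p.2)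
    ((nhdsWithin (0 : ℝ) (Set.Ioi 0)) ×ˢ nhds z)

/-- `f` is parabolically epi-differentiable at `x` for `w`. -/
def ParabEpiDiff (f : E → EReal) (x w : E) : Prop :=
  (∃ z : E, parabSubderiv f x w z < ⊤) ∧
    ∀ t : ℕ → ℝ, (∀ k, 0 < t k) → Tendsto t atTop (nhds 0) →
      ∀ z : E, ∃ zs : ℕ → E, Tendsto zs atTop (nhds z) ∧
        Tendsto (fun k => parabQuot f x w (t k) (zs k)) atTop (nhds (parabSubderiv f x w z))

/-- `φ` is a generalized quadratic form: its domain is a linear subspace and on the domain it is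
given by a symmetric linear operator. -/
def IsGQF (ip : E → E → ℝ) (φ : E → EReal) : Prop :=
  (φ 0 ≠ ⊤) ∧
  (∀ x y : E, φ x ≠ ⊤ → φ y ≠ ⊤ → φ (x + y) ≠ ⊤) ∧
  (∀ (c : ℝ) (x : E), φ x ≠ ⊤ → φ (c • x) ≠ ⊤) ∧
  ∃ L : E → E,
    (∀ x y : E, φ x ≠ ⊤ → φ y ≠ ⊤ → L (x + y) = L x + L y) ∧
    (∀ (c : ℝ) (x : E), φ x ≠ ⊤ → L (c • x) = c • L x) ∧
    (∀ x y : E, φ x ≠ ⊤ → φ y ≠ ⊤ → ip (L x) y = ip x (L y)) ∧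
    (∀ x : E, φ x ≠ ⊤ → φ x = ((ip (L x) x : ℝ) : EReal))

/-- `f` is generalized twice differentiable at `x` for `v`. -/
def GenTwiceDiff (ip : E → E → ℝ) (f : E → EReal) (x v : E) : Prop :=
  TwiceEpiDiff ip f x v ∧ IsGQF ip (subderiv2 ip f x v)

/-- Proto-differentiability of a set-valued map `F` at `x` for `y ∈ F x`. -/
def ProtoDiff (F : E → Set E) (x y : E) : Prop :=
  ∀ w η : E, (w, η) ∈ tangentCone {p : E × E | p.2 ∈ F p.1} (x, y) →
    ∀ t : ℕ → ℝ, (∀ k, 0 < t k) → Tendsto t atTop (nhds 0) →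
      ∃ ws ηs : ℕ → E, Tendsto ws atTop (nhds w) ∧ Tendsto ηs atTop (nhds η) ∧
        ∀ k, y + t k • ηs k ∈ F (x + t k • ws k)

/-- Relative interior of a set (interior relative to its affine hull). -/
def relInterior (C : Set E) : Set E :=
  {y | y ∈ C ∧ ∃ V ∈ nhds y, ∀ z ∈ V, z ∈ affineSpan ℝ C → z ∈ C}

/-- A polyhedral set: the intersection of finitely many closed half-spaces. -/
def IsPolyhedral (ip : E → E → ℝ) (C : Set E) : Prop :=
  ∃ (k : ℕ) (a : Fin k → E) (b : Fin k → ℝ), C = {x | ∀ j : Fin k, ip (a j) x ≤ b j}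

/-- The subdifferential of a convex function. -/
def convexSubdiff (ip : E → E → ℝ) (f : E → EReal) (x : E) : Set E :=
  {v | ∀ z : E, f x + ((ip v (z - x) : ℝ) : EReal) ≤ f z}

/-- The natural inner product on `E × ℝ`. -/
def ipProd (ip : E → E → ℝ) : E × ℝ → E × ℝ → ℝ :=
  fun p q => ip p.1 q.1 + p.2 * q.2

/-- The epigraph of `f`. -/
def epiSet (f : E → EReal) : Set (E × ℝ) :=
  {p | f p.1 ≤ (p.2 : EReal)}

/-- `f` is subdifferentially regular at `x`. -/
def SubdiffRegularAt (ip : E → E → ℝ) (f : E → EReal) (x : E) : Prop :=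
  IsFiniteAt f x ∧
    regNormalCone (ipProd ip) (epiSet f) (x, (f x).toReal) =
      limNormalCone (ipProd ip) (epiSet f) (x, (f x).toReal)

/-! Real-valued versions: semidifferentiability, gradients. -/

/-- `f` is semidifferentiable at `x`. -/
def SemiDiffAt (f : E → ℝ) (x : E) : Prop :=
  ∀ w : E, ∃ d : ℝ,
    Tendsto (fun p : ℝ × E => (p.1)⁻¹ * (f (x + p.1 • p.2) - f x))
      ((nhdsWithin (0 : ℝ) (Set.Ioi 0)) ×ˢ nhds w) (nhds d)

/-- The (real value of the) subderivative of a real-valued function. -/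
noncomputable def dReal (f : E → ℝ) (x w : E) : ℝ :=
  (subderiv (fun y => ((f y : ℝ) : EReal)) x w).toReal

/-- The second-order difference quotient built from the subderivative. -/
noncomputable def sdq2R (f : E → ℝ) (x : E) (t : ℝ) (w : E) : ℝ :=
  (2 / t ^ 2) * (f (x + t • w) - f x - t * dReal f x w)

/-- `f` is twice semidifferentiable at `x`. -/
def TwiceSemiDiffAt (f : E → ℝ) (x : E) : Prop :=
  SemiDiffAt f x ∧
    ∀ w : E, ∃ d : ℝ,
      Tendsto (fun p : ℝ × E => sdq2R f x p.1 p.2)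
        ((nhdsWithin (0 : ℝ) (Set.Ioi 0)) ×ˢ nhds w) (nhds d)

/-- The second semiderivative `d²f(x)(w)` (the liminf; it is the full limit whenever `f` is
twice semidifferentiable at `x`). -/
noncomputable def secondSemiDeriv (f : E → ℝ) (x w : E) : EReal :=
  Filter.liminf (fun p : ℝ × E => ((sdq2R f x p.1 p.2 : ℝ) : EReal))
    ((nhdsWithin (0 : ℝ) (Set.Ioi 0)) ×ˢ nhds w)

/-- `f` is (Fréchet) differentiable at `x` with gradient `g` (w.r.t. inner product `ip`). -/
def HasGradAt (ip : E → E → ℝ) (f : E → ℝ) (x g : E) : Prop :=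
  Tendsto (fun y : E => (nrm ip (y - x))⁻¹ * (f y - f x - ip g (y - x)))
    (nhdsWithin x {x}ᶜ) (nhds 0)

/-- `f` is locally Lipschitz continuous around `x`. -/
def LocLipAt (ip : E → E → ℝ) (f : E → ℝ) (x : E) : Prop :=
  ∃ V ∈ nhds x, ∃ ℓ : ℝ, 0 ≤ ℓ ∧ ∀ a ∈ V, ∀ b ∈ V, |f a - f b| ≤ ℓ * nrm ip (a - b)

/-- `f` is twice differentiable at `x` with gradient map `G` near `x` and second derivative
(the derivative of `G` at `x`) given by the linear map `Dxx`. -/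
def HasSecondDerivAt (ip : E → E → ℝ) (f : E → EReal) (x : E) (G : E → E) (Dxx : E → E) :
    Prop :=
  ∃ V ∈ nhds x, ∃ fr : E → ℝ,
    (∀ z ∈ V, f z = ((fr z : ℝ) : EReal)) ∧
    (∀ z ∈ V, HasGradAt ip fr z (G z)) ∧
    IsLinearMap ℝ Dxx ∧
    Tendsto (fun z : E => (nrm ip (z - x))⁻¹ • (G z - G x - Dxx (z - x)))
      (nhdsWithin x {x}ᶜ) (nhds 0)

/-- `f` is twice differentiable at `x`. -/
def TwiceDiffAt (ip : E → E → ℝ) (f : E → EReal) (x : E) : Prop :=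
  ∃ G Dxx : E → E, HasSecondDerivAt ip f x G Dxx

end Generic

/-! ## Eigenvalues and spectral machinery -/

open scoped Classical in
/-- The eigenvalues of a real symmetric matrix, arranged in nonincreasing order
(junk value `0` if the matrix is not symmetric). -/
noncomputable def eigval {n : ℕ} (X : Matrix (Fin n) (Fin n) ℝ) : Fin n → ℝ :=
  if h : X.IsHermitian then
    fun i => h.eigenvalues (Tuple.sort (fun j => -h.eigenvalues j) i)
  else 0

/-- `Oⁿ(X)`: orthogonal matrices realizing the ordered spectral decomposition of `X`. -/
def eigOrth {n : ℕ} (X : Matrix (Fin n) (Fin n) ℝ) : Set (Matrix (Fin n) (Fin n) ℝ) :=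
  {U | U * Uᵀ = 1 ∧ X = U * Matrix.diagonal (eigval X) * Uᵀ}

open scoped Classical in
/-- The block `α_m` of indices `j` whose eigenvalue `λ_j(X)` equals `λ_i(X)`. -/
noncomputable def blockSet {n : ℕ} (X : Matrix (Fin n) (Fin n) ℝ) (i : Fin n) :
    Finset (Fin n) :=
  Finset.univ.filter fun j => eigval X j = eigval X i

lemma mem_blockSet_self {n : ℕ} (X : Matrix (Fin n) (Fin n) ℝ) (i : Fin n) :
    i ∈ blockSet X i := by
  simp [blockSet]

/-- The increasing enumeration of the block of `i`. -/
noncomputable def blockEmb {n : ℕ} (X : Matrix (Fin n) (Fin n) ℝ) (i : Fin n) :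
    Fin (blockSet X i).card → Fin n :=
  fun a => ((blockSet X i).orderIsoOfFin rfl a : Fin n)

/-- The position of `i` inside its own block. -/
noncomputable def blockIdx {n : ℕ} (X : Matrix (Fin n) (Fin n) ℝ) (i : Fin n) :
    Fin (blockSet X i).card :=
  ((blockSet X i).orderIsoOfFin rfl).symm ⟨i, mem_blockSet_self X i⟩

/-- The principal submatrix of `M` corresponding to the block of `i` (for `X`). -/
noncomputable def blockMat {n : ℕ} (X M : Matrix (Fin n) (Fin n) ℝ) (i : Fin n) :
    Matrix (Fin (blockSet X i).card) (Fin (blockSet X i).card) ℝ :=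
  Matrix.of fun a b => M (blockEmb X i a) (blockEmb X i b)

/-- The directional derivative `λ'(X;H)` of the ordered eigenvalue map, computed through
`U ∈ Oⁿ(X)`: blockwise ordered eigenvalues of `U_{α_m}ᵀ H U_{α_m}`. -/
noncomputable def lambdaDir {n : ℕ} (X U H : Matrix (Fin n) (Fin n) ℝ) : Fin n → ℝ :=
  fun i => eigval (blockMat X (Uᵀ * H * U) i) (blockIdx X i)

open scoped Classical in
/-- The Moore–Penrose pseudoinverse of a square real matrix, characterized by the four
Penrose equations. -/
noncomputable def pinv {n : ℕ} (A : Matrix (Fin n) (Fin n) ℝ) :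
    Matrix (Fin n) (Fin n) ℝ :=
  if h : ∃ B : Matrix (Fin n) (Fin n) ℝ,
      A * B * A = A ∧ B * A * B = B ∧ (A * B)ᵀ = A * B ∧ (B * A)ᵀ = B * A
  then h.choose else 0

/-- The curvature term `2 ∑ₘ ⟨Diag(y)_{αₘαₘ}, U_{αₘ}ᵀ H (μₘ I - X)† H U_{αₘ}⟩`, written as a
single sum over all indices. -/
noncomputable def curvTerm {n : ℕ} (X U H : Matrix (Fin n) (Fin n) ℝ) (y : Fin n → ℝ) : ℝ :=
  2 * ∑ i : Fin n, y i *
    (Uᵀ * (H * pinv (eigval X i • (1 : Matrix (Fin n) (Fin n) ℝ) - X) * H) * U) i i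

/-- Two symmetric matrices admit a simultaneous ordered spectral decomposition. -/
def simOrdSpec {k : ℕ} (A B : Matrix (Fin k) (Fin k) ℝ) : Prop :=
  ∃ P : Matrix (Fin k) (Fin k) ℝ, P * Pᵀ = 1 ∧
    A = P * Matrix.diagonal (eigval A) * Pᵀ ∧
    B = P * Matrix.diagonal (eigval B) * Pᵀ

/-- The subspace of symmetric `n × n` real matrices. -/
def symSubmodule (n : ℕ) : Submodule ℝ (Matrix (Fin n) (Fin n) ℝ) where
  carrier := {A | A.IsSymm}
  add_mem' := by
    intro a b ha hb
    simp only [Set.mem_setOf_eq, Matrix.IsSymm] at *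
    rw [Matrix.transpose_add, ha, hb]
  zero_mem' := by
    simp only [Set.mem_setOf_eq, Matrix.IsSymm, Matrix.transpose_zero]
  smul_mem' := by
    intro c a ha
    simp only [Set.mem_setOf_eq, Matrix.IsSymm] at *
    rw [Matrix.transpose_smul, ha]

/-- The space `Sⁿ` of symmetric `n × n` real matrices. -/
abbrev Sym (n : ℕ) : Type := ↥(symSubmodule n)

/-- The trace inner product `⟨A, B⟩ = tr(AB)` on `Sⁿ`. -/
noncomputable def ipM {n : ℕ} (A B : Sym n) : ℝ :=
  ((A : Matrix (Fin n) (Fin n) ℝ) * (B : Matrix (Fin n) (Fin n) ℝ)).trace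

/-- The Euclidean inner product on `ℝⁿ`. -/
def ipV {n : ℕ} (v w : Fin n → ℝ) : ℝ :=
  ∑ i, v i * w i

/-- The spectral function `g = θ ∘ λ` on `Sⁿ`. -/
noncomputable def specFn {n : ℕ} (θ : (Fin n → ℝ) → EReal) : Sym n → EReal :=
  fun A => θ (eigval (A : Matrix (Fin n) (Fin n) ℝ))

/-- A function on `ℝⁿ` is symmetric (permutation invariant). -/
def SymmetricFn {n : ℕ} {α : Type*} (θ : (Fin n → ℝ) → α) : Prop :=
  ∀ (x : Fin n → ℝ) (σ : Equiv.Perm (Fin n)), θ (fun i => x (σ i)) = θ x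

/-- The diagonal matrix `Diag(w)` as an element of `Sⁿ`. -/
noncomputable def diagSym {n : ℕ} (w : Fin n → ℝ) : Sym n :=
  ⟨Matrix.diagonal w, Matrix.isSymm_diagonal w⟩

/-- The `i`-th order statistic: `orderStat x i` is the `i`-th largest entry of `x`. -/
noncomputable def orderStat {n : ℕ} (x : Fin n → ℝ) : Fin n → ℝ :=
  fun i => x (Tuple.sort (fun j => -x j) i)




lemma eigval_antitone {n : ℕ} (A : Matrix (Fin n) (Fin n) ℝ) (hA : A.IsSymm) :
    Antitone (eigval A) := by
  have h : A.IsHermitian := by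
    rw [Matrix.IsHermitian, Matrix.conjTranspose_eq_transpose_of_trivial]; exact hA
  intro a b hab
  have := Tuple.monotone_sort (fun j => -h.eigenvalues j) hab
  simp only [Function.comp_apply, neg_le_neg_iff] at this
  simp only [eigval, dif_pos h]
  exact this

lemma exists_eig {n : ℕ} (A : Matrix (Fin n) (Fin n) ℝ) (hA : A.IsSymm) :
    ∃ U : Matrix (Fin n) (Fin n) ℝ, Uᵀ * U = 1 ∧ U * Uᵀ = 1 ∧
      A = U * Matrix.diagonal (eigval A) * Uᵀ := by
  have h : A.IsHermitian := by
    rw [Matrix.IsHermitian, Matrix.conjTranspose_eq_transpose_of_trivial]; exact hA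
  set V : Matrix (Fin n) (Fin n) ℝ := h.eigenvectorUnitary.1 with hV
  have hVV : Vᵀ * V = 1 := by
    have := Unitary.coe_star_mul_self h.eigenvectorUnitary
    rwa [Matrix.star_eq_conjTranspose, Matrix.conjTranspose_eq_transpose_of_trivial] at this
  have hA2 : A = V * Matrix.diagonal h.eigenvalues * Vᵀ := by
    have := h.spectral_theorem
    rw [Unitary.conjStarAlgAut_apply] at this
    rw [Matrix.star_eq_conjTranspose, Matrix.conjTranspose_eq_transpose_of_trivial] at this
    exact this
  set σ := Tuple.sort (fun j => -h.eigenvalues j) with hσ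
  have h1 : (V.submatrix id σ)ᵀ * V.submatrix id σ = 1 := by
    rw [Matrix.transpose_submatrix, Matrix.submatrix_mul _ _ σ id σ Function.bijective_id |>.symm,
      hVV, Matrix.submatrix_one_equiv]
  refine ⟨V.submatrix id σ, h1, mul_eq_one_comm.mp h1, ?_⟩
  have hd : Matrix.diagonal (eigval A) = (Matrix.diagonal h.eigenvalues).submatrix σ σ := by
    rw [Matrix.submatrix_diagonal_equiv]
    simp only [eigval, dif_pos h]
    rfl
  rw [hd, Matrix.transpose_submatrix,
    Matrix.submatrix_mul_equiv, Matrix.submatrix_mul_equiv]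
  simpa using hA2

/-- Quadratic form in an eigenbasis. -/
lemma quad_eig {n : ℕ} {A U : Matrix (Fin n) (Fin n) ℝ} {d : Fin n → ℝ}
    (hU : Uᵀ * U = 1) (hA : A = U * Matrix.diagonal d * Uᵀ) (a : Fin n → ℝ) :
    (U *ᵥ a) ⬝ᵥ (A *ᵥ (U *ᵥ a)) = ∑ j, d j * a j ^ 2 := by
  have : A *ᵥ (U *ᵥ a) = U *ᵥ (Matrix.diagonal d *ᵥ a) := by
    rw [hA, Matrix.mulVec_mulVec, Matrix.mulVec_mulVec]
    congr 1
    rw [Matrix.mul_assoc, hU, Matrix.mul_one]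
  rw [this, Matrix.dotProduct_mulVec, Matrix.vecMul_mulVec, hU, Matrix.vecMul_one]
  simp only [dotProduct, Matrix.mulVec_diagonal]
  exact Finset.sum_congr rfl fun j _ => by ring

lemma norm_eig {n : ℕ} {U : Matrix (Fin n) (Fin n) ℝ}
    (hU : Uᵀ * U = 1) (a : Fin n → ℝ) :
    (U *ᵥ a) ⬝ᵥ (U *ᵥ a) = ∑ j, a j ^ 2 := by
  rw [Matrix.dotProduct_mulVec, Matrix.vecMul_mulVec, hU, Matrix.vecMul_one]
  simp only [dotProduct]
  exact Finset.sum_congr rfl fun j _ => by ring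

/-- A linear map `Ψ` whose `i`-th coordinate vanishes has a nonzero kernel element. -/
lemma exists_ker {n : ℕ} (i : Fin n) (Ψ : (Fin n → ℝ) →ₗ[ℝ] (Fin n → ℝ))
    (h : ∀ a, Ψ a i = 0) : ∃ a, a ≠ 0 ∧ Ψ a = 0 := by
  by_contra hcon
  push Not at hcon
  have hinj : Function.Injective Ψ := by
    rw [← LinearMap.ker_eq_bot, LinearMap.ker_eq_bot']
    intro a ha
    by_contra hne
    exact hcon a hne ha
  have hsurj := LinearMap.surjective_of_injective hinj
  obtain ⟨a, ha⟩ := hsurj (Pi.single i 1)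
  have := h a
  rw [ha] at this
  simp at this

lemma eig_ge {n : ℕ} (A : Matrix (Fin n) (Fin n) ℝ) (hA : A.IsSymm) (i : Fin n) (c : ℝ)
    (φ : (Fin n → ℝ) →ₗ[ℝ] (Fin n → ℝ))
    (hinj : ∀ a, (∀ j, i < j → a j = 0) → φ a = 0 → a = 0)
    (h : ∀ a, (∀ j, i < j → a j = 0) → c * (φ a ⬝ᵥ φ a) ≤ φ a ⬝ᵥ (A *ᵥ φ a)) :
    c ≤ eigval A i := by
  obtain ⟨U, hU, hU', hAU⟩ := exists_eig A hA
  have hanti := eigval_antitone A hA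
  let Ψ : (Fin n → ℝ) →ₗ[ℝ] (Fin n → ℝ) :=
    { toFun := fun a j => if j < i then (Uᵀ *ᵥ φ a) j else if j = i then 0 else a j
      map_add' := by
        intro a b; ext j; simp only [map_add, Matrix.mulVec_add, Pi.add_apply]
        split_ifs <;> simp
      map_smul' := by
        intro r a; ext j
        simp only [map_smul, Matrix.mulVec_smul, Pi.smul_apply, RingHom.id_apply]
        split_ifs <;> simp }
  obtain ⟨a, ha0, ha⟩ := exists_ker i Ψ (by intro a; simp [Ψ])
  have h1 : ∀ j, i < j → a j = 0 := by
    intro j hj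
    have := congrFun ha j
    simpa [Ψ, not_lt_of_gt hj, hj.ne'] using this
  have h2 : ∀ j, j < i → (Uᵀ *ᵥ φ a) j = 0 := by
    intro j hj
    have := congrFun ha j
    simpa [Ψ, hj] using this
  set b := Uᵀ *ᵥ φ a with hb
  have hφ : φ a = U *ᵥ b := by rw [hb, Matrix.mulVec_mulVec, hU', Matrix.one_mulVec]
  have h3 := h a h1
  have hφ0 : φ a ≠ 0 := fun h0 => ha0 (hinj a h1 h0)
  rw [hφ, quad_eig hU hAU, norm_eig hU] at h3
  have h4 : ∑ j, eigval A j * b j ^ 2 ≤ eigval A i * ∑ j, b j ^ 2 := by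
    rw [Finset.mul_sum]
    apply Finset.sum_le_sum
    intro j _
    by_cases hj : j < i
    · simp [h2 j hj]
    · exact mul_le_mul_of_nonneg_right (hanti (not_lt.mp hj)) (sq_nonneg _)
  have h5 : 0 < ∑ j, b j ^ 2 := by
    have hne : b ≠ 0 := by
      intro h0; apply hφ0; rw [hφ, h0, Matrix.mulVec_zero]
    obtain ⟨j, hj⟩ := Function.ne_iff.mp hne
    exact Finset.sum_pos' (fun j _ => sq_nonneg _) ⟨j, Finset.mem_univ _, by
      have : b j ≠ 0 := hj
      positivity⟩
  exact le_of_mul_le_mul_right (h3.trans h4) h5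

lemma eig_le {n : ℕ} (A : Matrix (Fin n) (Fin n) ℝ) (hA : A.IsSymm) (i : Fin n) (c : ℝ)
    (φ : (Fin n → ℝ) →ₗ[ℝ] (Fin n → ℝ))
    (hinj : ∀ a, (∀ j, j < i → a j = 0) → φ a = 0 → a = 0)
    (h : ∀ a, (∀ j, j < i → a j = 0) → φ a ⬝ᵥ (A *ᵥ φ a) ≤ c * (φ a ⬝ᵥ φ a)) :
    eigval A i ≤ c := by
  obtain ⟨U, hU, hU', hAU⟩ := exists_eig A hA
  have hanti := eigval_antitone A hA
  let Ψ : (Fin n → ℝ) →ₗ[ℝ] (Fin n → ℝ) :=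
    { toFun := fun a j => if i < j then (Uᵀ *ᵥ φ a) j else if j = i then 0 else a j
      map_add' := by
        intro a b; ext j; simp only [map_add, Matrix.mulVec_add, Pi.add_apply]
        split_ifs <;> simp
      map_smul' := by
        intro r a; ext j
        simp only [map_smul, Matrix.mulVec_smul, Pi.smul_apply, RingHom.id_apply]
        split_ifs <;> simp }
  obtain ⟨a, ha0, ha⟩ := exists_ker i Ψ (by intro a; simp [Ψ])
  have h1 : ∀ j, j < i → a j = 0 := by
    intro j hj
    have := congrFun ha j
    simpa [Ψ, not_lt_of_gt hj, hj.ne] using this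
  have h2 : ∀ j, i < j → (Uᵀ *ᵥ φ a) j = 0 := by
    intro j hj
    have := congrFun ha j
    simpa [Ψ, hj] using this
  set b := Uᵀ *ᵥ φ a with hb
  have hφ : φ a = U *ᵥ b := by rw [hb, Matrix.mulVec_mulVec, hU', Matrix.one_mulVec]
  have h3 := h a h1
  have hφ0 : φ a ≠ 0 := fun h0 => ha0 (hinj a h1 h0)
  rw [hφ, quad_eig hU hAU, norm_eig hU] at h3
  have h4 : eigval A i * ∑ j, b j ^ 2 ≤ ∑ j, eigval A j * b j ^ 2 := by
    rw [Finset.mul_sum]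
    apply Finset.sum_le_sum
    intro j _
    by_cases hj : i < j
    · simp [h2 j hj]
    · exact mul_le_mul_of_nonneg_right (hanti (not_lt.mp hj)) (sq_nonneg _)
  have h5 : 0 < ∑ j, b j ^ 2 := by
    have hne : b ≠ 0 := by
      intro h0; apply hφ0; rw [hφ, h0, Matrix.mulVec_zero]
    obtain ⟨j, hj⟩ := Function.ne_iff.mp hne
    exact Finset.sum_pos' (fun j _ => sq_nonneg _) ⟨j, Finset.mem_univ _, by
      have : b j ≠ 0 := hj
      positivity⟩
  exact le_of_mul_le_mul_right (h4.trans h3) h5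


lemma pinv_eq {n : ℕ} {A B : Matrix (Fin n) (Fin n) ℝ}
    (h1 : A * B * A = A) (h2 : B * A * B = B) (h3 : (A * B)ᵀ = A * B) (h4 : (B * A)ᵀ = B * A) :
    pinv A = B := by
  have hex : ∃ B : Matrix (Fin n) (Fin n) ℝ,
      A * B * A = A ∧ B * A * B = B ∧ (A * B)ᵀ = A * B ∧ (B * A)ᵀ = B * A :=
    ⟨B, h1, h2, h3, h4⟩
  have hp : pinv A = hex.choose := by
    unfold pinv
    exact dif_pos hex
  obtain ⟨c1, c2, c3, c4⟩ := hex.choose_spec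
  rw [hp]
  set C := hex.choose with hC
  clear_value C
  have e1 : A * C = A * B := by
    calc A * C = (A * B * A) * C := by rw [h1]
      _ = (A * B) * (A * C) := by simp only [Matrix.mul_assoc]
      _ = (A * B)ᵀ * (A * C)ᵀ := by rw [h3, c3]
      _ = ((A * C) * (A * B))ᵀ := by rw [Matrix.transpose_mul (A * C)]
      _ = ((A * C * A) * B)ᵀ := by simp only [Matrix.mul_assoc]
      _ = A * B := by rw [c1, h3]
  have e2 : C * A = B * A := by
    calc C * A = C * (A * B * A) := by rw [h1]
      _ = (C * A) * (B * A) := by simp only [Matrix.mul_assoc]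
      _ = (C * A)ᵀ * (B * A)ᵀ := by rw [h4, c4]
      _ = ((B * A) * (C * A))ᵀ := by rw [Matrix.transpose_mul (B * A)]
      _ = (B * (A * C * A))ᵀ := by simp only [Matrix.mul_assoc]
      _ = B * A := by rw [c1, h4]
  calc C = C * A * C := c2.symm
    _ = B * A * C := by rw [e2]
    _ = B * (A * C) := by rw [Matrix.mul_assoc]
    _ = B * A * B := by rw [e1, Matrix.mul_assoc]
    _ = B := h2

/-- conjugated diagonals multiply -/
lemma conj_mul {n : ℕ} {U : Matrix (Fin n) (Fin n) ℝ} (hU : Uᵀ * U = 1) (d e : Fin n → ℝ) :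
    (U * Matrix.diagonal d * Uᵀ) * (U * Matrix.diagonal e * Uᵀ)
      = U * Matrix.diagonal (fun j => d j * e j) * Uᵀ := by
  rw [← Matrix.diagonal_mul_diagonal]
  calc _ = U * Matrix.diagonal d * (Uᵀ * U) * Matrix.diagonal e * Uᵀ := by
        simp only [Matrix.mul_assoc]
    _ = _ := by rw [hU]; simp only [Matrix.mul_assoc, Matrix.mul_one]

lemma conj_symm {n : ℕ} (U : Matrix (Fin n) (Fin n) ℝ) (d : Fin n → ℝ) :
    (U * Matrix.diagonal d * Uᵀ)ᵀ = U * Matrix.diagonal d * Uᵀ := by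
  simp [Matrix.transpose_mul, Matrix.mul_assoc]

lemma conj_mulVec {n : ℕ} {U : Matrix (Fin n) (Fin n) ℝ} (hU : Uᵀ * U = 1) (d a : Fin n → ℝ) :
    (U * Matrix.diagonal d * Uᵀ) *ᵥ (U *ᵥ a) = U *ᵥ (fun j => d j * a j) := by
  rw [Matrix.mulVec_mulVec, Matrix.mul_assoc, hU, Matrix.mul_one, ← Matrix.mulVec_mulVec]
  congr 1
  ext j
  rw [Matrix.mulVec_diagonal]

/-- Structural data around an eigenvalue. -/
structure EigData {n : ℕ} (X G P : Matrix (Fin n) (Fin n) ℝ) (μ : ℝ) : Prop where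
  Xs : X.IsSymm
  Gs : G.IsSymm
  Ps : P.IsSymm
  XP : X * P = μ • P
  PG : P * G = 0
  GP : G * P = 0
  PP : P * P = P
  XG : X * G = μ • G - 1 + P

lemma exists_eigData {n : ℕ} {X U : Matrix (Fin n) (Fin n) ℝ} {d : Fin n → ℝ}
    (hU : Uᵀ * U = 1) (hU' : U * Uᵀ = 1) (hX : X = U * Matrix.diagonal d * Uᵀ) (μ : ℝ) :
    EigData X (pinv (μ • (1 : Matrix (Fin n) (Fin n) ℝ) - X))
      (U * Matrix.diagonal (fun j => if d j = μ then 1 else 0) * Uᵀ) μ := by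
  have hN : μ • (1 : Matrix (Fin n) (Fin n) ℝ) - X
      = U * Matrix.diagonal (fun j => μ - d j) * Uᵀ := by
    rw [hX]
    have : Matrix.diagonal (fun j => μ - d j) = μ • (1 : Matrix (Fin n) (Fin n) ℝ) - Matrix.diagonal d := by
      rw [← Matrix.diagonal_one, ← Matrix.diagonal_smul, Matrix.diagonal_sub]
      simp
    rw [this, Matrix.mul_sub, Matrix.sub_mul]
    simp [hU']
  have hG : pinv (μ • (1 : Matrix (Fin n) (Fin n) ℝ) - X)
      = U * Matrix.diagonal (fun j => (μ - d j)⁻¹) * Uᵀ := by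
    rw [hN]
    apply pinv_eq
    · rw [conj_mul hU, conj_mul hU]; congr; ext j
      by_cases h : μ - d j = 0
      · simp [h]
      · field_simp
    · rw [conj_mul hU, conj_mul hU]; congr; ext j
      by_cases h : μ - d j = 0
      · simp [h]
      · field_simp
    · rw [conj_mul hU, conj_symm]
    · rw [conj_mul hU, conj_symm]
  have hone : (1 : Matrix (Fin n) (Fin n) ℝ) = U * Matrix.diagonal (fun _ => 1) * Uᵀ := by
    rw [Matrix.diagonal_one, Matrix.mul_one, hU']
  refine ⟨?_, ?_, ?_, ?_, ?_, ?_, ?_, ?_⟩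
  · rw [hX]; exact conj_symm _ _
  · rw [hG]; exact conj_symm _ _
  · exact conj_symm _ _
  · rw [hX, conj_mul hU, ← Matrix.smul_mul, ← Matrix.mul_smul, ← Matrix.diagonal_smul]
    congr; ext j
    by_cases h : d j = μ <;> simp [h]
  · rw [hG, conj_mul hU]
    have hz : (fun j => (if d j = μ then (1:ℝ) else 0) * (μ - d j)⁻¹) = fun _ => 0 := by
      ext j
      by_cases h : d j = μ <;> simp [h]
    rw [hz]; simp
  · rw [hG, conj_mul hU]
    have hz : (fun j => (μ - d j)⁻¹ * (if d j = μ then (1:ℝ) else 0)) = fun _ => 0 := by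
      ext j
      by_cases h : d j = μ <;> simp [h]
    rw [hz]; simp
  · rw [conj_mul hU]
    congr; ext j
    by_cases h : d j = μ <;> simp [h]
  · rw [hG]
    conv_rhs => rw [hone]
    rw [hX, conj_mul hU, ← Matrix.smul_mul, ← Matrix.mul_smul, ← Matrix.diagonal_smul,
      ← Matrix.sub_mul, ← Matrix.mul_sub, ← Matrix.add_mul, ← Matrix.mul_add,
      Matrix.diagonal_sub, Matrix.diagonal_add]
    congr; ext j
    by_cases h : d j = μ
    · simp [h]
    · have h' : μ - d j ≠ 0 := fun h0 => h (by linarith)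
      simp [h]
      field_simp
      ring

/-- sum of absolute values of the entries -/
def absK {n : ℕ} (M : Matrix (Fin n) (Fin n) ℝ) : ℝ := ∑ j, ∑ k, |M j k|

lemma absK_nonneg {n : ℕ} (M : Matrix (Fin n) (Fin n) ℝ) : 0 ≤ absK M :=
  Finset.sum_nonneg fun _ _ => Finset.sum_nonneg fun _ _ => abs_nonneg _

lemma continuous_absK {n : ℕ} : Continuous (absK (n := n)) := by
  unfold absK
  fun_prop

lemma abs_bilin_le {n : ℕ} (M : Matrix (Fin n) (Fin n) ℝ) (x y : Fin n → ℝ) :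
    2 * |x ⬝ᵥ (M *ᵥ y)| ≤ absK M * (x ⬝ᵥ x + y ⬝ᵥ y) := by
  have hx : ∀ (x : Fin n → ℝ) j, x j ^ 2 ≤ x ⬝ᵥ x := by
    intro x j
    have : x ⬝ᵥ x = ∑ j, x j ^ 2 := Finset.sum_congr rfl fun j _ => by ring
    rw [this]
    exact Finset.single_le_sum (f := fun j => x j ^ 2) (fun j _ => sq_nonneg _) (Finset.mem_univ j)
  have h1 : |x ⬝ᵥ (M *ᵥ y)| ≤ ∑ j, ∑ k, |M j k| * ((x ⬝ᵥ x + y ⬝ᵥ y) / 2) := by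
    simp only [dotProduct, Matrix.mulVec, Finset.mul_sum]
    refine (Finset.abs_sum_le_sum_abs _ _).trans (Finset.sum_le_sum fun j _ => ?_)
    refine (Finset.abs_sum_le_sum_abs _ _).trans (Finset.sum_le_sum fun k _ => ?_)
    have e : |x j * (M j k * y k)| = |M j k| * (|x j| * |y k|) := by
      rw [abs_mul, abs_mul]; ring
    rw [e]
    apply mul_le_mul_of_nonneg_left _ (abs_nonneg _)
    have := hx x j
    have := hx y k
    simp only [dotProduct] at *
    nlinarith [sq_nonneg (|x j| - |y k|), sq_abs (x j), sq_abs (y k)]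
  have h2 : ∑ j, ∑ k, |M j k| * ((x ⬝ᵥ x + y ⬝ᵥ y) / 2) = absK M * ((x ⬝ᵥ x + y ⬝ᵥ y) / 2) := by
    simp only [absK, Finset.sum_mul]
  rw [h2] at h1
  linarith

lemma sym_dot {n : ℕ} {M : Matrix (Fin n) (Fin n) ℝ} (hM : M.IsSymm) (x y : Fin n → ℝ) :
    x ⬝ᵥ (M *ᵥ y) = (M *ᵥ x) ⬝ᵥ y := by
  rw [Matrix.dotProduct_mulVec, ← Matrix.mulVec_transpose, hM]

/-- the error coefficient -/
def kap {n : ℕ} (G H : Matrix (Fin n) (Fin n) ℝ) (σ : ℝ) : ℝ :=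
  absK H + |σ| + absK (H * G * H) + |σ| * absK (H * G) + absK (H * G * H * G * H)
    + |σ| * absK (H * G * G * H)

lemma quad_exact {n : ℕ} {X G P : Matrix (Fin n) (Fin n) ℝ} {μ : ℝ} (E : EigData X G P μ)
    {H : Matrix (Fin n) (Fin n) ℝ} (hH : H.IsSymm) (t σ : ℝ) (u w : Fin n → ℝ)
    (hu : P *ᵥ u = u) (hw : P *ᵥ w = 0) (z : Fin n → ℝ)
    (hz : z = u + w + t • (G *ᵥ (H *ᵥ u))) :
    z ⬝ᵥ ((X + t • H) *ᵥ z) - (μ + t * σ) * (z ⬝ᵥ z) =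
      w ⬝ᵥ (X *ᵥ w) - μ * (w ⬝ᵥ w) + t * (u ⬝ᵥ (H *ᵥ u)) + t ^ 2 * (u ⬝ᵥ ((H * G * H) *ᵥ u))
        - t * σ * (u ⬝ᵥ u) + (t * (w ⬝ᵥ (H *ᵥ w)) - t * σ * (w ⬝ᵥ w)
        + 2 * t ^ 2 * (u ⬝ᵥ ((H * G * H) *ᵥ w)) - 2 * t ^ 2 * σ * (u ⬝ᵥ ((H * G) *ᵥ w))
        + t ^ 3 * (u ⬝ᵥ ((H * G * H * G * H) *ᵥ u)) - σ * t ^ 3 * (u ⬝ᵥ ((H * G * G * H) *ᵥ u))) := by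
  set h := H *ᵥ u with hh
  set y := G *ᵥ h with hy
  set p := P *ᵥ h with hp
  have Xu : X *ᵥ u = μ • u := by
    rw [← hu, Matrix.mulVec_mulVec, E.XP, Matrix.smul_mulVec]
  have Xy : X *ᵥ y = μ • y - h + p := by
    rw [hy, Matrix.mulVec_mulVec, E.XG, Matrix.add_mulVec, Matrix.sub_mulVec, Matrix.smul_mulVec,
      Matrix.one_mulVec]
  have uw : u ⬝ᵥ w = 0 := by rw [← hu, ← sym_dot E.Ps, hw, dotProduct_zero]
  have Gu : G *ᵥ u = 0 := by rw [← hu, Matrix.mulVec_mulVec, E.GP, Matrix.zero_mulVec]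
  have uy : u ⬝ᵥ y = 0 := by rw [hy, sym_dot E.Gs, Gu, zero_dotProduct]
  have pw : p ⬝ᵥ w = 0 := by rw [hp, ← sym_dot E.Ps, hw, dotProduct_zero]
  have py : p ⬝ᵥ y = 0 := by
    rw [hp, ← sym_dot E.Ps, hy, Matrix.mulVec_mulVec, E.PG, Matrix.zero_mulVec, dotProduct_zero]
  have up : u ⬝ᵥ p = u ⬝ᵥ h := by rw [hp, sym_dot E.Ps, hu]
  have yXw : y ⬝ᵥ (X *ᵥ w) = μ * (y ⬝ᵥ w) - h ⬝ᵥ w + p ⬝ᵥ w := by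
    rw [sym_dot E.Xs, Xy]; simp [add_dotProduct, sub_dotProduct]
  have uXw : u ⬝ᵥ (X *ᵥ w) = 0 := by
    rw [sym_dot E.Xs, Xu]; simp [uw]
  have uHw : u ⬝ᵥ (H *ᵥ w) = h ⬝ᵥ w := by rw [sym_dot hH]
  have uHy : u ⬝ᵥ (H *ᵥ y) = h ⬝ᵥ y := by rw [sym_dot hH]
  have wHy : w ⬝ᵥ (H *ᵥ y) = y ⬝ᵥ (H *ᵥ w) := by rw [sym_dot hH, dotProduct_comm]
  have e1 : u ⬝ᵥ ((H * G * H) *ᵥ u) = h ⬝ᵥ y := by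
    rw [← Matrix.mulVec_mulVec, ← Matrix.mulVec_mulVec, sym_dot hH]
  have e2 : u ⬝ᵥ ((H * G * H) *ᵥ w) = y ⬝ᵥ (H *ᵥ w) := by
    rw [← Matrix.mulVec_mulVec, ← Matrix.mulVec_mulVec, sym_dot hH, sym_dot E.Gs]
  have e3 : u ⬝ᵥ ((H * G) *ᵥ w) = y ⬝ᵥ w := by
    rw [← Matrix.mulVec_mulVec, sym_dot hH, sym_dot E.Gs]
  have e4 : u ⬝ᵥ ((H * G * H * G * H) *ᵥ u) = y ⬝ᵥ (H *ᵥ y) := by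
    simp only [← Matrix.mulVec_mulVec]
    rw [sym_dot hH, sym_dot E.Gs]
  have e5 : u ⬝ᵥ ((H * G * G * H) *ᵥ u) = y ⬝ᵥ y := by
    simp only [← Matrix.mulVec_mulVec]
    rw [sym_dot hH, sym_dot E.Gs]
  rw [e1, e2, e3, e4, e5, hz]
  simp only [Matrix.add_mulVec, Matrix.smul_mulVec, Matrix.mulVec_add, Matrix.mulVec_smul, Xu, Xy,
    add_dotProduct, dotProduct_add, smul_dotProduct, dotProduct_smul, smul_eq_mul,
    dotProduct_sub, uXw, yXw, uHw, uHy, wHy, ← hh]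
  rw [dotProduct_comm w u, dotProduct_comm y u, dotProduct_comm w y, dotProduct_comm w h,
    dotProduct_comm y h, dotProduct_comm w p, dotProduct_comm y p, uw, uy, pw, py, up]
  ring

lemma quad_bound {n : ℕ} {X G P : Matrix (Fin n) (Fin n) ℝ} {μ : ℝ} (E : EigData X G P μ)
    {H : Matrix (Fin n) (Fin n) ℝ} (hH : H.IsSymm) (t σ : ℝ) (ht : 0 ≤ t) (u w : Fin n → ℝ)
    (hu : P *ᵥ u = u) (hw : P *ᵥ w = 0) (z : Fin n → ℝ)
    (hz : z = u + w + t • (G *ᵥ (H *ᵥ u))) :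
    |(z ⬝ᵥ ((X + t • H) *ᵥ z) - (μ + t * σ) * (z ⬝ᵥ z)) -
      (w ⬝ᵥ (X *ᵥ w) - μ * (w ⬝ᵥ w) + t * (u ⬝ᵥ (H *ᵥ u)) + t ^ 2 * (u ⬝ᵥ ((H * G * H) *ᵥ u))
        - t * σ * (u ⬝ᵥ u))| ≤ t * kap G H σ * (w ⬝ᵥ w) + t ^ 3 * kap G H σ * (u ⬝ᵥ u) := by
  rw [quad_exact E hH t σ u w hu hw z hz, add_sub_cancel_left]
  have nn : ∀ x : Fin n → ℝ, 0 ≤ x ⬝ᵥ x := fun x =>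
    Finset.sum_nonneg fun j _ => mul_self_nonneg _
  set W := w ⬝ᵥ w
  set V := u ⬝ᵥ u
  have hW : 0 ≤ W := nn w
  have hV : 0 ≤ V := nn u
  have cross : ∀ M : Matrix (Fin n) (Fin n) ℝ,
      2 * t ^ 2 * |u ⬝ᵥ (M *ᵥ w)| ≤ absK M * (t * W + t ^ 3 * V) := by
    intro M
    have := abs_bilin_le M (t • u) w
    simp only [smul_dotProduct, dotProduct_smul, smul_eq_mul, abs_mul, abs_of_nonneg ht] at this
    have := mul_le_mul_of_nonneg_left this ht
    calc _ = t * (2 * (t * |u ⬝ᵥ (M *ᵥ w)|)) := by ring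
      _ ≤ _ := this
      _ = _ := by ring
  have b1 : |w ⬝ᵥ (H *ᵥ w)| ≤ absK H * W := by have := abs_bilin_le H w w; linarith
  have b2 := cross (H * G * H)
  have b3 := cross (H * G)
  have b4 : |u ⬝ᵥ ((H * G * H * G * H) *ᵥ u)| ≤ absK (H * G * H * G * H) * V := by
    have := abs_bilin_le (H * G * H * G * H) u u; linarith
  have b5 : |u ⬝ᵥ ((H * G * G * H) *ᵥ u)| ≤ absK (H * G * G * H) * V := by
    have := abs_bilin_le (H * G * G * H) u u; linarith
  have k1 := absK_nonneg H
  have k2 := absK_nonneg (H * G * H)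
  have k3 := absK_nonneg (H * G)
  have k4 := absK_nonneg (H * G * H * G * H)
  have k5 := absK_nonneg (H * G * G * H)
  have s0 := abs_nonneg σ
  have t3 : 0 ≤ t ^ 3 := by positivity
  have c1 : |t * (w ⬝ᵥ (H *ᵥ w))| ≤ t * (absK H * W) := by
    rw [abs_mul, abs_of_nonneg ht]; exact mul_le_mul_of_nonneg_left b1 ht
  have c2 : |t * σ * W| = t * |σ| * W := by
    rw [abs_mul, abs_mul, abs_of_nonneg ht, abs_of_nonneg hW]
  have c3 : |2 * t ^ 2 * (u ⬝ᵥ ((H * G * H) *ᵥ w))| ≤ absK (H * G * H) * (t * W + t ^ 3 * V) := by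
    rw [abs_mul, abs_of_nonneg (by positivity : 0 ≤ 2 * t ^ 2)]; exact b2
  have c4 : |2 * t ^ 2 * σ * (u ⬝ᵥ ((H * G) *ᵥ w))| ≤ |σ| * (absK (H * G) * (t * W + t ^ 3 * V)) := by
    rw [abs_mul, abs_mul, abs_of_nonneg (by positivity : 0 ≤ 2 * t ^ 2)]
    have := mul_le_mul_of_nonneg_left b3 s0
    linarith
  have c5 : |t ^ 3 * (u ⬝ᵥ ((H * G * H * G * H) *ᵥ u))| ≤ t ^ 3 * (absK (H * G * H * G * H) * V) := by
    rw [abs_mul, abs_of_nonneg t3]; exact mul_le_mul_of_nonneg_left b4 t3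
  have c6 : |σ * t ^ 3 * (u ⬝ᵥ ((H * G * G * H) *ᵥ u))| ≤ |σ| * t ^ 3 * (absK (H * G * G * H) * V) := by
    rw [abs_mul, abs_mul, abs_of_nonneg t3]; exact mul_le_mul_of_nonneg_left b5 (by positivity)
  have r : t * kap G H σ * W + t ^ 3 * kap G H σ * V =
      t * (absK H * W) + t * |σ| * W + absK (H * G * H) * (t * W + t ^ 3 * V)
      + |σ| * (absK (H * G) * (t * W + t ^ 3 * V)) + t ^ 3 * (absK (H * G * H * G * H) * V)
      + |σ| * t ^ 3 * (absK (H * G * G * H) * V)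
      + (t * W * (absK (H * G * H * G * H) + |σ| * absK (H * G * G * H))
        + t ^ 3 * V * (absK H + |σ|)) := by
    unfold kap; ring
  rw [r]
  have r2 : 0 ≤ (t * W * (absK (H * G * H * G * H) + |σ| * absK (H * G * G * H))
        + t ^ 3 * V * (absK H + |σ|)) := by positivity
  rw [abs_le] at *
  have c2' := abs_le.mp c2.le
  constructor <;> linarith [c1.1, c1.2, c2'.1, c2'.2, c3.1, c3.2, c4.1, c4.2, c5.1, c5.2, c6.1, c6.2]


/-- spectral projector written through an eigenvector matrix -/
noncomputable def projM {n : ℕ} (U : Matrix (Fin n) (Fin n) ℝ) (d : Fin n → ℝ) (μ : ℝ) :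
    Matrix (Fin n) (Fin n) ℝ :=
  U * Matrix.diagonal (fun j => if d j = μ then 1 else 0) * Uᵀ

lemma projM_mulVec {n : ℕ} {U : Matrix (Fin n) (Fin n) ℝ} (hU : Uᵀ * U = 1) (d : Fin n → ℝ)
    (μ : ℝ) (a : Fin n → ℝ) :
    projM U d μ *ᵥ (U *ᵥ a) = U *ᵥ (fun j => (if d j = μ then 1 else 0) * a j) :=
  conj_mulVec hU _ a

lemma mulVec_inj {n : ℕ} {U : Matrix (Fin n) (Fin n) ℝ} (hU : Uᵀ * U = 1) {a : Fin n → ℝ}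
    (h : U *ᵥ a = 0) : a = 0 := by
  have := congrArg (fun v => Uᵀ *ᵥ v) h
  simpa [Matrix.mulVec_mulVec, hU] using this

lemma dot_nonneg {n : ℕ} (x : Fin n → ℝ) : 0 ≤ x ⬝ᵥ x :=
  Finset.sum_nonneg fun j _ => mul_self_nonneg _

lemma symm_add_smul {n : ℕ} {X H : Matrix (Fin n) (Fin n) ℝ} (hX : X.IsSymm) (hH : H.IsSymm)
    (t : ℝ) : (X + t • H).IsSymm := by
  unfold Matrix.IsSymm at *
  rw [Matrix.transpose_add, Matrix.transpose_smul, hX, hH]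

/-- the perturbed embedding -/
def embL {n : ℕ} (U G H : Matrix (Fin n) (Fin n) ℝ) (u0 : Fin n → ℝ) (t : ℝ) (i : Fin n) :
    (Fin n → ℝ) →ₗ[ℝ] (Fin n → ℝ) where
  toFun a := a i • u0 + U *ᵥ (Function.update a i 0) + t • (G *ᵥ (H *ᵥ (a i • u0)))
  map_add' a b := by
    have : Function.update (a + b) i 0 = Function.update a i 0 + Function.update b i 0 := by
      ext j; by_cases h : j = i
      · subst h; simp
      · simp [h]
    rw [this]
    simp only [Pi.add_apply, add_smul, Matrix.mulVec_add, smul_add]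
    abel
  map_smul' c a := by
    have : Function.update (c • a) i 0 = c • Function.update a i 0 := by
      ext j; by_cases h : j = i
      · subst h; simp
      · simp [h]
    rw [this]
    simp only [Pi.smul_apply, smul_eq_mul, mul_smul, Matrix.mulVec_smul, smul_add, RingHom.id_apply]
    rw [smul_comm c t]

lemma lower_det {n : ℕ} {X G U : Matrix (Fin n) (Fin n) ℝ} {d : Fin n → ℝ} {μ g : ℝ}
    (hU : Uᵀ * U = 1) (hX : X = U * Matrix.diagonal d * Uᵀ)
    (E : EigData X G (projM U d μ) μ) (i : Fin n) (hg : 0 < g) (hd : ∀ j, j < i → μ + g ≤ d j)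
    {H : Matrix (Fin n) (Fin n) ℝ} (hH : H.IsSymm) (t σ ε : ℝ) (ht : 0 < t) (u0 : Fin n → ℝ)
    (hu : projM U d μ *ᵥ u0 = u0) (hu1 : u0 ⬝ᵥ u0 = 1)
    (hσ : σ = u0 ⬝ᵥ (H *ᵥ u0) + t * (u0 ⬝ᵥ ((H * G * H) *ᵥ u0)) - ε * t)
    (hk : t * kap G H σ ≤ ε) (hk' : t * kap G H σ ≤ g) :
    μ + t * σ ≤ eigval (X + t • H) i := by
  have hPw : ∀ a : Fin n → ℝ, (∀ j, i < j → a j = 0) →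
      projM U d μ *ᵥ (U *ᵥ (Function.update a i 0)) = 0 := by
    intro a ha
    rw [projM_mulVec hU]
    convert Matrix.mulVec_zero U
    rename_i j
    rcases lt_trichotomy j i with h | h | h
    · have := hd j h
      rw [if_neg (by linarith)]; simp
    · subst h; simp
    · simp [h.ne', ha j h]
  refine eig_ge _ (symm_add_smul E.Xs hH t) i _ (embL U G H u0 t i) ?_ ?_
  · intro a ha h0
    have h0 : a i • u0 + U *ᵥ (Function.update a i 0) + t • (G *ᵥ (H *ᵥ (a i • u0))) = 0 := h0
    have h1 := congrArg (fun v => projM U d μ *ᵥ v) h0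
    simp only [Matrix.mulVec_add, Matrix.mulVec_smul, hu, hPw a ha, Matrix.mulVec_mulVec, E.PG,
      ← Matrix.mul_assoc, Matrix.zero_mul, Matrix.zero_mulVec, smul_zero, add_zero,
      Matrix.mulVec_zero] at h1
    have h2 : a i = 0 := by
      have := congrArg (fun v => v ⬝ᵥ u0) h1
      simpa [smul_dotProduct, hu1] using this
    rw [h2] at h0
    simp only [zero_smul, zero_add, Matrix.mulVec_zero, smul_zero, add_zero] at h0
    have h3 := mulVec_inj hU h0
    have : Function.update a i 0 = a := by rw [← h2]; simp
    rwa [this] at h3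
  · intro a ha
    have hb := quad_bound E hH t σ ht.le (a i • u0) (U *ᵥ (Function.update a i 0))
      (by rw [Matrix.mulVec_smul, hu]) (hPw a ha) (embL U G H u0 t i a) rfl
    have hw : g * ((U *ᵥ (Function.update a i 0)) ⬝ᵥ (U *ᵥ (Function.update a i 0))) ≤
        (U *ᵥ (Function.update a i 0)) ⬝ᵥ (X *ᵥ (U *ᵥ (Function.update a i 0)))
        - μ * ((U *ᵥ (Function.update a i 0)) ⬝ᵥ (U *ᵥ (Function.update a i 0))) := by
      rw [quad_eig hU hX, norm_eig hU, Finset.mul_sum, Finset.mul_sum, ← Finset.sum_sub_distrib]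
      refine Finset.sum_le_sum fun j _ => ?_
      rcases lt_trichotomy j i with h | h | h
      · have := hd j h
        nlinarith [sq_nonneg (Function.update a i 0 j)]
      · subst h; simp
      · simp [h.ne', ha j h]
    have hwn := dot_nonneg (U *ᵥ (Function.update a i 0))
    generalize (U *ᵥ (Function.update a i 0)) ⬝ᵥ (X *ᵥ (U *ᵥ (Function.update a i 0))) = WX at *
    generalize (U *ᵥ (Function.update a i 0)) ⬝ᵥ (U *ᵥ (Function.update a i 0)) = W at *
    simp only [Matrix.mulVec_smul, smul_dotProduct, dotProduct_smul, smul_eq_mul, hu1] at hb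
    have h1 := (abs_le.mp hb).1
    generalize embL U G H u0 t i a ⬝ᵥ ((X + t • H) *ᵥ embL U G H u0 t i a) = Z at *
    generalize embL U G H u0 t i a ⬝ᵥ embL U G H u0 t i a = z at *
    generalize kap G H σ = k at *
    generalize u0 ⬝ᵥ (H *ᵥ u0) = q1 at *
    generalize u0 ⬝ᵥ ((H * G * H) *ᵥ u0) = q2 at *
    have a1 : 0 ≤ (g - t * k) * W := mul_nonneg (by linarith) hwn
    have a2 : 0 ≤ (ε - t * k) * (t ^ 2 * (a i) ^ 2) := mul_nonneg (by linarith) (by positivity)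
    subst hσ
    nlinarith

/-- the perturbed embedding for the upper bound -/
def embU {n : ℕ} (U G H P : Matrix (Fin n) (Fin n) ℝ) (t : ℝ) :
    (Fin n → ℝ) →ₗ[ℝ] (Fin n → ℝ) :=
  Matrix.mulVecLin (U + t • (G * H * P * U))

lemma upper_det {n : ℕ} {X G U : Matrix (Fin n) (Fin n) ℝ} {d : Fin n → ℝ} {μ g : ℝ}
    (hU : Uᵀ * U = 1) (hX : X = U * Matrix.diagonal d * Uᵀ)
    (E : EigData X G (projM U d μ) μ) (i : Fin n) (hg : 0 < g)
    (hd : ∀ j, i ≤ j → d j = μ ∨ d j + g ≤ μ)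
    {H : Matrix (Fin n) (Fin n) ℝ} (hH : H.IsSymm) (t σ ε : ℝ) (ht : 0 < t)
    (hσ : ∀ u, projM U d μ *ᵥ u = u →
      u ⬝ᵥ (H *ᵥ u) + t * (u ⬝ᵥ ((H * G * H) *ᵥ u)) ≤ (σ - ε * t) * (u ⬝ᵥ u))
    (hk : t * kap G H σ ≤ ε) (hk' : t * kap G H σ ≤ g) :
    eigval (X + t • H) i ≤ μ + t * σ := by
  set P := projM U d μ with hP
  have hemb : ∀ a, embU U G H P t a = P *ᵥ (U *ᵥ a) + (U *ᵥ a - P *ᵥ (U *ᵥ a))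
      + t • (G *ᵥ (H *ᵥ (P *ᵥ (U *ᵥ a)))) := by
    intro a
    simp only [embU, Matrix.mulVecLin_apply, Matrix.add_mulVec, Matrix.smul_mulVec,
      Matrix.mulVec_mulVec, Matrix.mul_assoc]
    abel
  have hPP : ∀ x, P *ᵥ (P *ᵥ x) = P *ᵥ x := fun x => by rw [Matrix.mulVec_mulVec, E.PP]
  have hPw : ∀ x, P *ᵥ (x - P *ᵥ x) = 0 := fun x => by rw [Matrix.mulVec_sub, hPP, sub_self]
  refine eig_le _ (symm_add_smul E.Xs hH t) i _ (embU U G H P t) ?_ ?_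
  · intro a ha h0
    rw [hemb] at h0
    have h1 := congrArg (fun v => P *ᵥ v) h0
    rw [Matrix.mulVec_add, Matrix.mulVec_add, hPw, hPP, Matrix.mulVec_smul,
      Matrix.mulVec_mulVec _ P G, E.PG] at h1
    simp only [Matrix.zero_mulVec, smul_zero, add_zero, Matrix.mulVec_zero] at h1
    rw [h1] at h0
    simp only [Matrix.mulVec_zero, smul_zero, add_zero, sub_zero, zero_add] at h0
    exact mulVec_inj hU h0
  · intro a ha
    have hb := quad_bound E hH t σ ht.le (P *ᵥ (U *ᵥ a)) (U *ᵥ a - P *ᵥ (U *ᵥ a))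
      (hPP _) (hPw _) (embU U G H P t a) (hemb a)
    have he : U *ᵥ a - P *ᵥ (U *ᵥ a) = U *ᵥ (fun j => (if d j = μ then 0 else 1) * a j) := by
      rw [hP, projM_mulVec hU, ← Matrix.mulVec_sub]
      congr 1; ext j
      by_cases h : d j = μ <;> simp [h]
    rw [he] at hb
    have hs := hσ _ (hPP (U *ᵥ a))
    generalize P *ᵥ (U *ᵥ a) = u at *
    generalize hb' : (fun j => (if d j = μ then (0:ℝ) else 1) * a j) = b at *
    have hw : (U *ᵥ b) ⬝ᵥ (X *ᵥ (U *ᵥ b)) - μ * ((U *ᵥ b) ⬝ᵥ (U *ᵥ b))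
        ≤ - (g * ((U *ᵥ b) ⬝ᵥ (U *ᵥ b))) := by
      rw [quad_eig hU hX, norm_eig hU, Finset.mul_sum, Finset.mul_sum, ← Finset.sum_sub_distrib,
        ← Finset.sum_neg_distrib]
      refine Finset.sum_le_sum fun j _ => ?_
      subst hb'
      simp only
      by_cases h : d j = μ
      · simp [h]
      · rcases lt_or_ge j i with h1 | h1
        · simp [ha j h1]
        · rcases hd j h1 with h2 | h2
          · exact absurd h2 h
          · rw [if_neg h]
            nlinarith [sq_nonneg (a j)]
    have hwn := dot_nonneg (U *ᵥ b)
    have hun := dot_nonneg u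
    generalize (U *ᵥ b) ⬝ᵥ (X *ᵥ (U *ᵥ b)) = WX at *
    generalize (U *ᵥ b) ⬝ᵥ (U *ᵥ b) = W at *
    have h1 := (abs_le.mp hb).2
    generalize embU U G H P t a ⬝ᵥ ((X + t • H) *ᵥ embU U G H P t a) = Z at *
    generalize embU U G H P t a ⬝ᵥ embU U G H P t a = z at *
    generalize kap G H σ = k at *
    generalize u ⬝ᵥ (H *ᵥ u) = q1 at *
    generalize u ⬝ᵥ ((H * G * H) *ᵥ u) = q2 at *
    generalize u ⬝ᵥ u = V at *
    have a1 : 0 ≤ (g - t * k) * W := mul_nonneg (by linarith) hwn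
    have a2 : 0 ≤ (ε - t * k) * (t ^ 2 * V) := mul_nonneg (by linarith) (by positivity)
    have a3 := mul_le_mul_of_nonneg_left hs ht.le
    nlinarith


lemma exists_gap {n : ℕ} (d : Fin n → ℝ) (μ : ℝ) :
    ∃ g : ℝ, 0 < g ∧ ∀ j, d j ≠ μ → g ≤ |d j - μ| := by
  classical
  have : ∀ s : Finset (Fin n), ∃ g : ℝ, 0 < g ∧ ∀ j ∈ s, d j ≠ μ → g ≤ |d j - μ| := by
    intro s
    induction s using Finset.induction_on with
    | empty => exact ⟨1, one_pos, by simp⟩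
    | insert a s _ ih =>
      obtain ⟨g, hg, h⟩ := ih
      by_cases ha : d a = μ
      · refine ⟨g, hg, fun j hj hne => ?_⟩
        rcases Finset.mem_insert.mp hj with rfl | hj
        · exact absurd ha hne
        · exact h j hj hne
      · refine ⟨min g |d a - μ|, lt_min hg (abs_pos.mpr (sub_ne_zero.mpr ha)), fun j hj hne => ?_⟩
        rcases Finset.mem_insert.mp hj with rfl | hj
        · exact min_le_right _ _
        · exact (min_le_left _ _).trans (h j hj hne)
  obtain ⟨g, hg, h⟩ := this Finset.univ
  exact ⟨g, hg, fun j => h j (Finset.mem_univ j)⟩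

lemma continuous_kap {n : ℕ} {T : Type*} [TopologicalSpace T] (G : Matrix (Fin n) (Fin n) ℝ)
    {H : T → Matrix (Fin n) (Fin n) ℝ} {σ : T → ℝ} (hH : Continuous H) (hσ : Continuous σ) :
    Continuous (fun p => kap G (H p) (σ p)) := by
  have h1 : Continuous fun p => H p * G := hH.matrix_mul continuous_const
  have h2 : Continuous fun p => H p * G * H p := h1.matrix_mul hH
  have h3 : Continuous fun p => H p * G * H p * G * H p :=
    (h2.matrix_mul continuous_const).matrix_mul hH
  have h4 : Continuous fun p => H p * G * G * H p :=
    (h1.matrix_mul continuous_const).matrix_mul hH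
  have k0 := continuous_absK.comp hH
  have k1 := continuous_absK.comp h1
  have k2 := continuous_absK.comp h2
  have k3 := continuous_absK.comp h3
  have k4 := continuous_absK.comp h4
  simp only [Function.comp_def] at *
  unfold kap
  fun_prop

lemma core {n : ℕ} (X : Sym n) (i : Fin n)
    (hlead : ∀ j : Fin n, j < i → eigval X.val i < eigval X.val j) :
    ∃ P : Matrix (Fin n) (Fin n) ℝ,
      EigData X.val (pinv (eigval X.val i • (1 : Matrix (Fin n) (Fin n) ℝ) - X.val)) P
        (eigval X.val i) ∧
      (∀ u, X.val *ᵥ u = eigval X.val i • u → P *ᵥ u = u) ∧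
      (∀ (u0 : Fin n → ℝ), P *ᵥ u0 = u0 → u0 ⬝ᵥ u0 = 1 → ∀ (H : Sym n) (ε : ℝ), 0 < ε →
        ∀ᶠ p : ℝ × Sym n in 𝓝[>] (0:ℝ) ×ˢ 𝓝 H,
          eigval X.val i + p.1 * (u0 ⬝ᵥ (p.2.val *ᵥ u0)) + p.1 ^ 2 * (u0 ⬝ᵥ ((p.2.val *
            pinv (eigval X.val i • (1 : Matrix (Fin n) (Fin n) ℝ) - X.val) * p.2.val) *ᵥ u0))
            - ε * p.1 ^ 2 ≤ eigval (X.val + p.1 • p.2.val) i) ∧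
      (∀ (H : Sym n) (s : ℝ), (∀ u, P *ᵥ u = u → u ⬝ᵥ (H.val *ᵥ u) ≤ s * (u ⬝ᵥ u)) →
        ∀ ε : ℝ, 0 < ε → ∀ᶠ t in 𝓝[>] (0:ℝ),
          eigval (X.val + t • (H.val - t • (P * (H.val *
            pinv (eigval X.val i • (1 : Matrix (Fin n) (Fin n) ℝ) - X.val) * H.val) * P))) i
            ≤ eigval X.val i + t * s + ε * t ^ 2) := by
  obtain ⟨U, hU, hU', hX⟩ := exists_eig X.val X.property
  have hanti := eigval_antitone X.val X.property
  set d := eigval X.val with hd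
  set μ := d i with hμ
  have E := exists_eigData hU hU' hX μ
  set G := pinv (μ • (1 : Matrix (Fin n) (Fin n) ℝ) - X.val) with hG
  change EigData X.val G (projM U d μ) μ at E
  obtain ⟨g, hg, hgap⟩ := exists_gap d μ
  have hlo : ∀ j, j < i → μ + g ≤ d j := by
    intro j hj
    have h1 := hlead j hj
    have h2 := hgap j h1.ne'
    rw [abs_of_pos (by linarith)] at h2
    linarith
  have hup : ∀ j, i ≤ j → d j = μ ∨ d j + g ≤ μ := by
    intro j hj
    by_cases h : d j = μ
    · exact Or.inl h
    · right
      have h1 : d j < μ := lt_of_le_of_ne (hanti hj) h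
      have h2 := hgap j h
      rw [abs_of_neg (by linarith)] at h2
      linarith
  refine ⟨projM U d μ, E, ?_, ?_, ?_⟩
  · intro u hu
    obtain ⟨a, rfl⟩ : ∃ a, u = U *ᵥ a := ⟨Uᵀ *ᵥ u, by rw [Matrix.mulVec_mulVec, hU', Matrix.one_mulVec]⟩
    rw [projM_mulVec hU]
    congr 1
    have h1 : U *ᵥ ((fun j => d j * a j) - μ • a) = 0 := by
      rw [Matrix.mulVec_sub, ← conj_mulVec hU, ← hX, hu, Matrix.mulVec_smul, sub_self]
    have h2 := mulVec_inj hU h1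
    ext j
    have h3 := congrFun h2 j
    simp only [Pi.sub_apply, Pi.smul_apply, smul_eq_mul, Pi.zero_apply] at h3
    by_cases h : d j = μ
    · simp [h]
    · have : (d j - μ) * a j = 0 := by linarith
      rcases mul_eq_zero.mp this with h4 | h4
      · exact absurd (by linarith) h
      · simp [h4]
  · intro u0 hu hu1 H ε hε
    let σ : ℝ × Sym n → ℝ := fun p => u0 ⬝ᵥ (p.2.val *ᵥ u0)
      + p.1 * (u0 ⬝ᵥ ((p.2.val * G * p.2.val) *ᵥ u0)) - ε * p.1
    have hval : Continuous fun p : ℝ × Sym n => p.2.val := continuous_subtype_val.comp continuous_snd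
    have hc2 : Continuous fun p : ℝ × Sym n => p.2.val * G * p.2.val :=
      (hval.matrix_mul continuous_const).matrix_mul hval
    have hσ : Continuous σ := by
      have e1 : Continuous fun p : ℝ × Sym n => u0 ⬝ᵥ (p.2.val *ᵥ u0) :=
        Continuous.dotProduct continuous_const (hval.matrix_mulVec continuous_const)
      have e2 : Continuous fun p : ℝ × Sym n => u0 ⬝ᵥ ((p.2.val * G * p.2.val) *ᵥ u0) :=
        Continuous.dotProduct continuous_const (hc2.matrix_mulVec continuous_const)
      exact (e1.add (continuous_fst.mul e2)).sub (continuous_const.mul continuous_fst)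
    have hk : Continuous fun p : ℝ × Sym n => p.1 * kap G p.2.val (σ p) :=
      continuous_fst.mul (continuous_kap G hval hσ)
    have hle : 𝓝[>] (0:ℝ) ×ˢ 𝓝 H ≤ 𝓝 ((0:ℝ), H) := by
      rw [nhds_prod_eq]; exact Filter.prod_mono nhdsWithin_le_nhds le_rfl
    have hev : ∀ᶠ p : ℝ × Sym n in 𝓝[>] (0:ℝ) ×ˢ 𝓝 H, p.1 * kap G p.2.val (σ p) < min ε g := by
      have := (hk.tendsto ((0:ℝ), H)).mono_left hle
      simp only [zero_mul] at this
      exact this.eventually_lt_const (lt_min hε hg)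
    have hpos : ∀ᶠ p : ℝ × Sym n in 𝓝[>] (0:ℝ) ×ˢ 𝓝 H, 0 < p.1 :=
      tendsto_fst.eventually self_mem_nhdsWithin
    filter_upwards [hev, hpos] with p h1 h2
    have := lower_det hU hX E i hg hlo p.2.property p.1 (σ p) ε h2 u0 hu hu1 rfl
      (h1.le.trans (min_le_left _ _)) (h1.le.trans (min_le_right _ _))
    refine le_trans (le_of_eq ?_) this
    simp only [σ]; ring
  · intro H s hs ε hε
    set P := projM U d μ with hP
    set K := P * (H.val * G * H.val) * P with hK
    have hHs : H.val.IsSymm := H.property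
    have hKs : K.IsSymm := by
      have h1 := E.Ps; have h2 := E.Gs
      unfold Matrix.IsSymm at *
      simp only [hK, Matrix.transpose_mul, h1, h2, hHs, Matrix.mul_assoc]
    have hval : Continuous fun t : ℝ => H.val - t • K := by fun_prop
    have hk : Continuous fun t : ℝ => t * kap G (H.val - t • K) (s + ε * t) :=
      continuous_id.mul (continuous_kap G hval (by fun_prop))
    have hev : ∀ᶠ t in 𝓝[>] (0:ℝ), t * kap G (H.val - t • K) (s + ε * t) < min ε g := by
      have := (hk.tendsto (0:ℝ)).mono_left (nhdsWithin_le_nhds (s := Set.Ioi 0))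
      simp only [zero_mul] at this
      exact this.eventually_lt_const (lt_min hε hg)
    filter_upwards [hev, self_mem_nhdsWithin] with t h1 h2
    have hKG : K * G = 0 := by rw [hK, Matrix.mul_assoc, E.PG, Matrix.mul_zero]
    have hGK : G * K = 0 := by rw [hK, ← Matrix.mul_assoc, ← Matrix.mul_assoc, E.GP]; simp
    have hsym : (H.val - t • K).IsSymm := by
      unfold Matrix.IsSymm at *
      rw [Matrix.transpose_sub, Matrix.transpose_smul, hHs, hKs]
    have hHG : (H.val - t • K) * G * (H.val - t • K) = H.val * G * H.val := by
      rw [Matrix.sub_mul, Matrix.smul_mul, hKG, smul_zero, sub_zero, Matrix.mul_assoc,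
        Matrix.mul_sub, Matrix.mul_smul, hGK, smul_zero, sub_zero, ← Matrix.mul_assoc]
    have := upper_det hU hX E i hg hup hsym t (s + ε * t) ε h2 ?_
      (h1.le.trans (min_le_left _ _)) (h1.le.trans (min_le_right _ _))
    · refine le_trans this (le_of_eq ?_)
      ring
    · intro u hu
      rw [hHG, Matrix.sub_mulVec, dotProduct_sub, Matrix.smul_mulVec, dotProduct_smul]
      have e : u ⬝ᵥ (K *ᵥ u) = u ⬝ᵥ ((H.val * G * H.val) *ᵥ u) := by
        rw [hK, ← Matrix.mulVec_mulVec, hu, ← Matrix.mulVec_mulVec, sym_dot E.Ps, hu]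
      rw [e, smul_eq_mul]
      have := hs u hu
      linarith


lemma ipM_self_pos {n : ℕ} (D : Sym n) (hD : D ≠ 0) : 0 < ipM D D := by
  have hs : D.val.IsSymm := D.property
  have e : ipM D D = ∑ j, ∑ k, D.val j k ^ 2 := by
    unfold ipM
    simp only [Matrix.trace, Matrix.diag, Matrix.mul_apply]
    refine Finset.sum_congr rfl fun j _ => Finset.sum_congr rfl fun k _ => ?_
    rw [hs.apply j k, sq]
  rw [e]
  have hnn : 0 ≤ ∑ j, ∑ k, D.val j k ^ 2 :=
    Finset.sum_nonneg fun j _ => Finset.sum_nonneg fun k _ => sq_nonneg _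
  refine lt_of_le_of_ne hnn fun h0 => hD ?_
  have h1 := (Finset.sum_eq_zero_iff_of_nonneg
    (fun j _ => Finset.sum_nonneg fun k _ => sq_nonneg _)).mp h0.symm
  ext j k
  have h2 := (Finset.sum_eq_zero_iff_of_nonneg (fun k _ => sq_nonneg (D.val j k))).mp
    (h1 j (Finset.mem_univ j)) k (Finset.mem_univ k)
  simpa using h2

lemma ipM_smul_right {n : ℕ} (Y D : Sym n) (t : ℝ) : ipM Y (t • D) = t * ipM Y D := by
  simp [ipM, Matrix.trace_smul]

lemma ipM_smul_left {n : ℕ} (Y D : Sym n) (t : ℝ) : ipM (t • Y) D = t * ipM Y D := by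
  simp [ipM, Matrix.trace_smul]

lemma reg_dir {n : ℕ} (F : Sym n → ℝ) (X Y D : Sym n) (hD : D ≠ 0) (c : ℝ)
    (hY : RegSubgrad ipM (fun A => ((F A : ℝ) : EReal)) X Y)
    (hF : ∀ᶠ t in 𝓝[>] (0:ℝ), F (X + t • D) ≤ F X + t * c) : ipM Y D ≤ c := by
  by_contra hlt
  push Not at hlt
  set N := nrm ipM D with hN
  have hNpos : 0 < N := Real.sqrt_pos.mpr (ipM_self_pos D hD)
  have hneg : (((c - ipM Y D) / N : ℝ) : EReal) < 0 := by
    have : (c - ipM Y D) / N < 0 := div_neg_of_neg_of_pos (by linarith) hNpos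
    exact_mod_cast this
  have h1 := eventually_lt_of_lt_liminf (lt_of_lt_of_le hneg hY.2)
  have htend : Tendsto (fun t : ℝ => X + t • D) (𝓝[>] (0:ℝ)) (𝓝[{X}ᶜ] X) := by
    rw [tendsto_nhdsWithin_iff]
    constructor
    · have hc : Continuous fun t : ℝ => X + t • D := by fun_prop
      have := (hc.tendsto 0).mono_left (nhdsWithin_le_nhds (s := Set.Ioi 0))
      simpa using this
    · filter_upwards [self_mem_nhdsWithin] with t ht
      simp only [Set.mem_compl_iff, Set.mem_singleton_iff, add_eq_left, smul_eq_zero, not_or]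
      exact ⟨ne_of_gt ht, hD⟩
  have h2 := htend.eventually h1
  obtain ⟨t, h3, h4, ht⟩ := (h2.and (hF.and self_mem_nhdsWithin)).exists
  have ht : 0 < t := ht
  have hn : nrm ipM (X + t • D - X) = t * N := by
    rw [add_sub_cancel_left, nrm, ipM_smul_right, ipM_smul_left, hN, nrm, ← mul_assoc,
      Real.sqrt_mul (mul_self_nonneg t), Real.sqrt_mul_self ht.le]
  rw [hn, add_sub_cancel_left, ipM_smul_right] at h3
  have h5 : (c - ipM Y D) / N < (t * N)⁻¹ * (F (X + t • D) - F X - t * ipM Y D) := by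
    beta_reduce at h3; exact_mod_cast h3
  have h6 : (t * N)⁻¹ * (F (X + t • D) - F X - t * ipM Y D) ≤
      (t * N)⁻¹ * (t * c - t * ipM Y D) :=
    mul_le_mul_of_nonneg_left (by linarith) (by positivity)
  have h7 : (t * N)⁻¹ * (t * c - t * ipM Y D) = (c - ipM Y D) / N := by
    field_simp
  linarith

lemma eig_pert {n : ℕ} {X U D : Matrix (Fin n) (Fin n) ℝ} {d : Fin n → ℝ}
    (hU : Uᵀ * U = 1) (hX : X = U * Matrix.diagonal d * Uᵀ) (hXs : X.IsSymm)
    (hD : D.IsSymm) (i : Fin n) (t c : ℝ)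
    (h : ∀ a : Fin n → ℝ, (∀ j, j < i → a j = 0) →
      ∑ j, d j * a j ^ 2 + t * ((U *ᵥ a) ⬝ᵥ (D *ᵥ (U *ᵥ a))) ≤ c * ∑ j, a j ^ 2) :
    eigval (X + t • D) i ≤ c := by
  refine eig_le _ (symm_add_smul hXs hD t) i _ (Matrix.mulVecLin U) ?_ ?_
  · intro a _ h0
    exact mulVec_inj hU h0
  · intro a ha
    simp only [Matrix.mulVecLin_apply]
    rw [Matrix.add_mulVec, dotProduct_add, quad_eig hU hX, norm_eig hU, Matrix.smul_mulVec,
      dotProduct_smul, smul_eq_mul]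
    exact h a ha

/-- the rank one symmetric matrix -/
def outer {n : ℕ} (v : Fin n → ℝ) : Sym n :=
  ⟨Matrix.vecMulVec v v, by
    change (Matrix.vecMulVec v v).IsSymm
    ext j k
    simp [Matrix.vecMulVec_apply, mul_comm]⟩

lemma outer_quad {n : ℕ} (v x : Fin n → ℝ) :
    x ⬝ᵥ ((outer v).val *ᵥ x) = (v ⬝ᵥ x) ^ 2 := by
  simp only [outer, Matrix.vecMulVec_mulVec, op_smul_eq_smul, dotProduct_smul, smul_eq_mul]
  rw [dotProduct_comm x v]; ring

lemma ipM_outer {n : ℕ} (Y : Sym n) (v : Fin n → ℝ) : ipM Y (outer v) = v ⬝ᵥ (Y.val *ᵥ v) := by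
  simp only [ipM, outer, Matrix.mul_vecMulVec, Matrix.trace_vecMulVec]
  rw [dotProduct_comm]

lemma outer_ne {n : ℕ} {v : Fin n → ℝ} (hv : v ≠ 0) : outer v ≠ 0 := by
  intro h
  apply hv
  have := outer_quad v v
  rw [h] at this
  simp only [ZeroMemClass.coe_zero, Matrix.zero_mulVec, dotProduct_zero] at this
  exact dotProduct_self_eq_zero.mp (pow_eq_zero_iff two_ne_zero |>.mp this.symm)

lemma reg_props {n : ℕ} (i : Fin n) (X Y : Sym n)
    (hY : RegSubgrad ipM (fun A : Sym n => ((eigval A.val i : ℝ) : EReal)) X Y) :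
    Y.val.trace = 1 ∧ (∀ v, 0 ≤ v ⬝ᵥ (Y.val *ᵥ v)) ∧ Y.val * X.val = eigval X.val i • Y.val := by
  obtain ⟨U, hU, hU', hX⟩ := exists_eig X.val X.property
  have hanti := eigval_antitone X.val X.property
  have hXs : X.val.IsSymm := X.property
  set d := eigval X.val with hd
  have hbase : ∀ a : Fin n → ℝ, (∀ j, j < i → a j = 0) →
      ∑ j, d j * a j ^ 2 ≤ d i * ∑ j, a j ^ 2 := by
    intro a ha
    rw [Finset.mul_sum]
    refine Finset.sum_le_sum fun j _ => ?_
    rcases lt_or_ge j i with h | h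
    · simp [ha j h]
    · exact mul_le_mul_of_nonneg_right (hanti h) (sq_nonneg _)
  have key : ∀ (D : Sym n), D ≠ 0 → ∀ c : ℝ, (∀ᶠ t in 𝓝[>] (0:ℝ), ∀ a : Fin n → ℝ,
      (∀ j, j < i → a j = 0) → ∑ j, d j * a j ^ 2 + t * ((U *ᵥ a) ⬝ᵥ (D.val *ᵥ (U *ᵥ a)))
        ≤ (d i + t * c) * ∑ j, a j ^ 2) → ipM Y D ≤ c := by
    intro D hD c hc
    refine reg_dir (fun A => eigval A.val i) X Y D hD c hY ?_
    filter_upwards [hc] with t ht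
    exact eig_pert hU hX hXs D.property i t _ ht
  let I : Sym n := ⟨1, by change (1 : Matrix (Fin n) (Fin n) ℝ).IsSymm; exact Matrix.transpose_one⟩
  have hI : I ≠ 0 := by
    intro h
    have := congrArg (fun A : Sym n => A.val i i) h
    simp [I] at this
  have t1 : ipM Y I ≤ 1 := by
    refine key I hI 1 (Eventually.of_forall fun t a ha => ?_)
    simp only [I, Matrix.one_mulVec]
    rw [norm_eig hU]
    have := hbase a ha
    linarith
  have t2 : ipM Y (-I) ≤ -1 := by
    refine key (-I) (neg_ne_zero.mpr hI) (-1) (Eventually.of_forall fun t a ha => ?_)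
    simp only [I, NegMemClass.coe_neg, Matrix.neg_mulVec, Matrix.one_mulVec, dotProduct_neg]
    rw [norm_eig hU]
    have := hbase a ha
    linarith
  have hnegip : ∀ D : Sym n, ipM Y (-D) = - ipM Y D := by
    intro D; simp [ipM]
  have htr : Y.val.trace = 1 := by
    have e : ipM Y I = Y.val.trace := by simp [ipM, I]
    rw [hnegip] at t2
    linarith
  have hpsd : ∀ v, 0 ≤ v ⬝ᵥ (Y.val *ᵥ v) := by
    intro v
    by_cases hv : v = 0
    · simp [hv]
    have := key (-(outer v)) (neg_ne_zero.mpr (outer_ne hv)) 0 (by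
      filter_upwards [self_mem_nhdsWithin] with t ht a ha
      have ht : 0 < t := ht
      simp only [NegMemClass.coe_neg, Matrix.neg_mulVec, dotProduct_neg, outer_quad]
      have := hbase a ha
      nlinarith [sq_nonneg (v ⬝ᵥ (U *ᵥ a))])
    rw [hnegip, ipM_outer] at this
    linarith
  refine ⟨htr, hpsd, ?_⟩
  have hYs : Y.val.IsSymm := Y.property
  have hY0 : ∀ k, d k ≠ d i → Y.val *ᵥ (U.col k) = 0 := by
    intro k hk
    have hcol : ∀ a : Fin n → ℝ, U.col k ⬝ᵥ (U *ᵥ a) = a k := by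
      intro a
      have : (Uᵀ *ᵥ (U *ᵥ a)) k = a k := by rw [Matrix.mulVec_mulVec, hU, Matrix.one_mulVec]
      exact this
    have hne : U.col k ≠ 0 := by
      intro h0
      have := hcol (Pi.single k 1)
      rw [h0] at this
      simp at this
    have hle := key (outer (U.col k)) (outer_ne hne) 0 (by
      have hev : ∀ᶠ t in 𝓝[>] (0:ℝ), k < i ∨ t < d i - d k := by
        rcases lt_or_ge k i with h | h
        · exact Eventually.of_forall fun t => Or.inl h
        · have : 0 < d i - d k := sub_pos.mpr (lt_of_le_of_ne (hanti h) hk)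
          filter_upwards [nhdsWithin_le_nhds (Iio_mem_nhds this)] with t ht
          exact Or.inr ht
      filter_upwards [hev, self_mem_nhdsWithin] with t h1 ht a ha
      have ht : 0 < t := ht
      rw [outer_quad, hcol, mul_zero, add_zero]
      rcases h1 with h1 | h1
      · rw [ha k h1]
        have := hbase a ha
        simpa using this
      · have e : t * a k ^ 2 = ∑ j, if j = k then t * a j ^ 2 else 0 := by simp
        rw [e, ← Finset.sum_add_distrib, Finset.mul_sum]
        refine Finset.sum_le_sum fun j _ => ?_
        by_cases hjk : j = k
        · subst hjk
          simp only [if_true]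
          nlinarith [sq_nonneg (a j)]
        · simp only [hjk, if_false, add_zero]
          rcases lt_or_ge j i with h | h
          · simp [ha j h]
          · exact mul_le_mul_of_nonneg_right (hanti h) (sq_nonneg _))
    rw [ipM_outer] at hle
    have hP : Y.val.PosSemidef := by
      refine Matrix.PosSemidef.of_dotProduct_mulVec_nonneg ?_ fun x => ?_
      · rw [Matrix.IsHermitian, Matrix.conjTranspose_eq_transpose_of_trivial]; exact hYs
      · simpa using hpsd x
    have := (hP.dotProduct_mulVec_zero_iff (U.col k)).mp (by
      simpa using le_antisymm hle (hpsd _))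
    exact this
  have h1 : Y.val * U * Matrix.diagonal d = d i • (Y.val * U) := by
    ext j k
    rw [Matrix.mul_diagonal, Matrix.smul_apply, smul_eq_mul]
    by_cases h : d k = d i
    · rw [h, mul_comm]
    · have h2 : (Y.val * U) j k = 0 := congrFun (hY0 k h) j
      rw [h2]; simp
  calc Y.val * X.val = Y.val * U * Matrix.diagonal d * Uᵀ := by
        conv_lhs => rw [hX]
        simp only [Matrix.mul_assoc]
    _ = d i • Y.val := by
        rw [h1, Matrix.smul_mul, Matrix.mul_assoc, hU', Matrix.mul_one]

lemma lim_props {n : ℕ} (i : Fin n) (X Y : Sym n)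
    (hY : LimSubgrad ipM (fun A : Sym n => ((eigval A.val i : ℝ) : EReal)) X Y) :
    Y.val.trace = 1 ∧ (∀ v, 0 ≤ v ⬝ᵥ (Y.val *ᵥ v)) ∧ Y.val * X.val = eigval X.val i • Y.val := by
  obtain ⟨xs, vs, hr, hx, hv, hf⟩ := hY
  have hf : Tendsto (fun k => eigval (xs k).val i) atTop (𝓝 (eigval X.val i)) :=
    EReal.tendsto_coe.mp hf
  have hp := fun k => reg_props i (xs k) (vs k) (hr k)
  have hx' : Tendsto (fun k => (xs k).val) atTop (𝓝 X.val) :=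
    (continuous_subtype_val.tendsto X).comp hx
  have hv' : Tendsto (fun k => (vs k).val) atTop (𝓝 Y.val) :=
    (continuous_subtype_val.tendsto Y).comp hv
  refine ⟨?_, fun v => ?_, ?_⟩
  · have c : Continuous fun A : Matrix (Fin n) (Fin n) ℝ => A.trace :=
      Continuous.matrix_trace continuous_id
    have := (c.tendsto _).comp hv'
    refine tendsto_nhds_unique this ?_
    simp only [Function.comp_def, (hp _).1]
    exact tendsto_const_nhds
  · have c : Continuous fun A : Matrix (Fin n) (Fin n) ℝ => v ⬝ᵥ (A *ᵥ v) :=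
      Continuous.dotProduct continuous_const (Continuous.matrix_mulVec continuous_id continuous_const)
    exact ge_of_tendsto' ((c.tendsto _).comp hv') fun k => (hp k).2.1 v
  · have c : Continuous fun p : Matrix (Fin n) (Fin n) ℝ × Matrix (Fin n) (Fin n) ℝ => p.1 * p.2 :=
      Continuous.matrix_mul continuous_fst continuous_snd
    have h1 := (c.tendsto (Y.val, X.val)).comp (hv'.prodMk_nhds hx')
    refine tendsto_nhds_unique h1 ?_
    simp only [Function.comp_def, (hp _).2.2]
    exact hf.smul hv'


lemma continuous_ipM {n : ℕ} (Y : Sym n) : Continuous fun H : Sym n => ipM Y H := by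
  unfold ipM
  exact Continuous.matrix_trace (Continuous.matrix_mul continuous_const continuous_subtype_val)

lemma prod_le_nhds {n : ℕ} (H : Sym n) : 𝓝[>] (0:ℝ) ×ˢ 𝓝 H ≤ 𝓝 ((0:ℝ), H) := by
  rw [nhds_prod_eq]; exact Filter.prod_mono nhdsWithin_le_nhds le_rfl

lemma prod_pos {n : ℕ} (H : Sym n) : ∀ᶠ p : ℝ × Sym n in 𝓝[>] (0:ℝ) ×ˢ 𝓝 H, 0 < p.1 :=
  tendsto_fst.eventually self_mem_nhdsWithin

lemma subderiv_ge {n : ℕ} (F : Sym n → ℝ) (X H : Sym n) (ℓ Q : Sym n → ℝ)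
    (hℓ : Continuous ℓ) (hQ : Continuous Q)
    (h : ∀ᶠ p : ℝ × Sym n in 𝓝[>] (0:ℝ) ×ˢ 𝓝 H,
      F X + p.1 * ℓ p.2 + p.1 ^ 2 * Q p.2 - 1 * p.1 ^ 2 ≤ F (X + p.1 • p.2)) :
    ((ℓ H : ℝ) : EReal) ≤ subderiv (fun A => ((F A : ℝ) : EReal)) X H := by
  unfold subderiv
  rw [le_liminf_iff]
  intro y hy
  obtain ⟨x, hyx, hx⟩ := EReal.lt_iff_exists_real_btwn.mp hy
  have hx : x < ℓ H := by exact_mod_cast hx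
  have hc : Continuous fun p : ℝ × Sym n => ℓ p.2 + p.1 * Q p.2 - p.1 := by fun_prop
  have ht := (hc.tendsto ((0:ℝ), H)).mono_left (prod_le_nhds H)
  simp only [zero_mul, add_zero, sub_zero] at ht
  filter_upwards [h, ht.eventually_const_lt hx, prod_pos H] with p h1 h2 h3
  refine hyx.trans ?_
  have : x < p.1⁻¹ * (F (X + p.1 • p.2) - F X) := by
    refine lt_of_lt_of_le h2 ?_
    rw [inv_mul_eq_div, le_div_iff₀ h3]
    nlinarith
  beta_reduce
  exact_mod_cast this

lemma sdq2_real {n : ℕ} (F : Sym n → ℝ) (X Y H : Sym n) (t : ℝ) :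
    sdq2 ipM (fun A => ((F A : ℝ) : EReal)) X Y t H =
      ((2 / t ^ 2 * (F (X + t • H) - F X - t * ipM Y H) : ℝ) : EReal) := by
  unfold sdq2
  beta_reduce
  norm_cast

open scoped Classical in
lemma main_abs {n : ℕ} (F : Sym n → ℝ) (X Y : Sym n) (Q : Sym n → ℝ) (hQ : Continuous Q)
    (hL : ∀ (H : Sym n) (ε : ℝ), 0 < ε → ∀ᶠ p : ℝ × Sym n in 𝓝[>] (0:ℝ) ×ˢ 𝓝 H,
      F X + p.1 * ipM Y p.2 + p.1 ^ 2 * Q p.2 - ε * p.1 ^ 2 ≤ F (X + p.1 • p.2))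
    (hU : ∀ H ∈ criticalCone ipM (fun A => ((F A : ℝ) : EReal)) X Y, ∃ K : Sym n,
      ipM Y K = Q H ∧ ∀ ε : ℝ, 0 < ε → ∀ᶠ t in 𝓝[>] (0:ℝ),
        F (X + t • (H - t • K)) ≤ F X + t * ipM Y H + ε * t ^ 2) :
    TwiceEpiDiff ipM (fun A => ((F A : ℝ) : EReal)) X Y ∧
      ∀ H : Sym n, subderiv2 ipM (fun A => ((F A : ℝ) : EReal)) X Y H =
        (if H ∈ criticalCone ipM (fun A => ((F A : ℝ) : EReal)) X Y then (0 : EReal)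
          else (⊤ : EReal)) + ((2 * Q H : ℝ) : EReal) := by
  set f : Sym n → EReal := fun A => ((F A : ℝ) : EReal) with hf
  set val : Sym n → EReal := fun H => (if H ∈ criticalCone ipM f X Y then (0 : EReal)
          else (⊤ : EReal)) + ((2 * Q H : ℝ) : EReal) with hval
  have valc : ∀ H ∈ criticalCone ipM f X Y, val H = ((2 * Q H : ℝ) : EReal) := by
    intro H hH; simp only [hval, if_pos hH, zero_add]
  have valn : ∀ H, H ∉ criticalCone ipM f X Y → val H = ⊤ := by
    intro H hH; simp only [hval, if_neg hH]; exact EReal.top_add_coe _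
  have hip := continuous_ipM Y
  -- lower estimate
  have L : ∀ H, ∀ b < val H, ∀ᶠ p : ℝ × Sym n in 𝓝[>] (0:ℝ) ×ˢ 𝓝 H,
      b < sdq2 ipM f X Y p.1 p.2 := by
    intro H b hb
    obtain ⟨x, hbx, hx⟩ := EReal.lt_iff_exists_real_btwn.mp hb
    by_cases hH : H ∈ criticalCone ipM f X Y
    · rw [valc H hH] at hx
      have hx : x < 2 * Q H := by exact_mod_cast hx
      have hc : Continuous fun p : ℝ × Sym n => 2 * Q p.2 := by fun_prop
      have ht := (hc.tendsto ((0:ℝ), H)).mono_left (prod_le_nhds H)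
      have hlt : (2 * Q H + x) / 2 < 2 * Q H := by linarith
      filter_upwards [hL H ((2 * Q H - x) / 4) (by linarith), ht.eventually_const_lt hlt,
        prod_pos H] with p h1 h2 h3
      refine hbx.trans ?_
      rw [sdq2_real]
      have : x < 2 / p.1 ^ 2 * (F (X + p.1 • p.2) - F X - p.1 * ipM Y p.2) := by
        rw [div_mul_eq_mul_div, lt_div_iff₀ (by positivity)]
        have h4 : 0 < p.1 ^ 2 := by positivity
        nlinarith
      exact_mod_cast this
    · have hge : ((ipM Y H : ℝ) : EReal) ≤ subderiv f X H :=
        subderiv_ge F X H (ipM Y) Q hip hQ (hL H 1 one_pos)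
      have hgt : ((ipM Y H : ℝ) : EReal) < subderiv f X H :=
        lt_of_le_of_ne hge fun h => hH h.symm
      obtain ⟨q, hq1, hq2⟩ := EReal.lt_iff_exists_real_btwn.mp hgt
      have hq1 : ipM Y H < q := by exact_mod_cast hq1
      have hev := eventually_lt_of_lt_liminf hq2
      have hc : Continuous fun p : ℝ × Sym n => ipM Y p.2 := by fun_prop
      have ht := (hc.tendsto ((0:ℝ), H)).mono_left (prod_le_nhds H)
      have hc2 : Continuous fun p : ℝ × Sym n => x * p.1 := by fun_prop
      have ht2 := (hc2.tendsto ((0:ℝ), H)).mono_left (prod_le_nhds H)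
      simp only [mul_zero] at ht2
      have hlt : ipM Y H < (q + ipM Y H) / 2 := by linarith
      have hlt2 : 0 < q - ipM Y H := by linarith
      filter_upwards [hev, ht.eventually_lt_const hlt, ht2.eventually_lt_const hlt2,
        prod_pos H] with p h1 h2 h3 h4
      refine hbx.trans ?_
      rw [sdq2_real]
      have h5 : q < p.1⁻¹ * (F (X + p.1 • p.2) - F X) := by
        simp only [hf] at h1
        exact_mod_cast h1
      rw [inv_mul_eq_div, lt_div_iff₀ h4] at h5
      have : x < 2 / p.1 ^ 2 * (F (X + p.1 • p.2) - F X - p.1 * ipM Y p.2) := by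
        rw [div_mul_eq_mul_div, lt_div_iff₀ (by positivity)]
        have h6 := mul_lt_mul_of_pos_right h3 h4
        have h7 := mul_lt_mul_of_pos_right h2 h4
        nlinarith
      exact_mod_cast this
  have Uq : ∀ H, ∀ t : ℕ → ℝ, (∀ k, 0 < t k) → Tendsto t atTop (𝓝 0) →
      ∃ ws : ℕ → Sym n, Tendsto ws atTop (𝓝 H) ∧
        ∀ b, val H < b → ∀ᶠ k in atTop, sdq2 ipM f X Y (t k) (ws k) < b := by
    intro H t htp ht0
    have htw : Tendsto t atTop (𝓝[>] (0:ℝ)) :=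
      tendsto_nhdsWithin_iff.mpr ⟨ht0, Eventually.of_forall htp⟩
    by_cases hH : H ∈ criticalCone ipM f X Y
    · obtain ⟨K, hK, hup⟩ := hU H hH
      refine ⟨fun k => H - t k • K, ?_, ?_⟩
      · have hc : Continuous fun s : ℝ => H - s • K := by fun_prop
        have := (hc.tendsto 0).comp ht0
        simpa [Function.comp_def] using this
      · intro b hb
        obtain ⟨x, hx, hxb⟩ := EReal.lt_iff_exists_real_btwn.mp hb
        rw [valc H hH] at hx
        have hx : 2 * Q H < x := by exact_mod_cast hx
        filter_upwards [htw.eventually (hup ((x - 2 * Q H) / 2) (by linarith))] with k h1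
        refine lt_of_le_of_lt ?_ hxb
        rw [sdq2_real]
        have h3 := htp k
        have e : ipM Y (H - t k • K) = ipM Y H - t k * Q H := by
          rw [← hK, ← ipM_smul_right]; simp [ipM, Matrix.mul_sub]
        have : 2 / t k ^ 2 * (F (X + t k • (H - t k • K)) - F X - t k * ipM Y (H - t k • K))
            ≤ x := by
          rw [div_mul_eq_mul_div, div_le_iff₀ (by positivity), e]
          nlinarith
        exact_mod_cast this
    · refine ⟨fun _ => H, tendsto_const_nhds, fun b hb => ?_⟩
      rw [valn H hH] at hb
      exact absurd hb not_top_lt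
  have hseq : ∀ (H : Sym n) (t : ℕ → ℝ), (∀ k, 0 < t k) → Tendsto t atTop (𝓝 0) →
      ∀ ws : ℕ → Sym n, Tendsto ws atTop (𝓝 H) →
      Tendsto (fun k => (t k, ws k)) atTop (𝓝[>] (0:ℝ) ×ˢ 𝓝 H) := by
    intro H t htp ht0 ws hws
    exact (tendsto_nhdsWithin_iff.mpr ⟨ht0, Eventually.of_forall htp⟩).prodMk hws
  have heq : ∀ H, subderiv2 ipM f X Y H = val H := by
    intro H
    apply le_antisymm
    · by_contra hlt
      push Not at hlt
      obtain ⟨b, hb1, hb2⟩ := exists_between hlt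
      have hev := eventually_lt_of_lt_liminf hb2
      have hp : ∀ k : ℕ, (0:ℝ) < 1 / ((k:ℝ) + 1) := fun k => by positivity
      obtain ⟨ws, hws, hw⟩ := Uq H _ hp tendsto_one_div_add_atTop_nhds_zero_nat
      have h1 := (hseq H _ hp tendsto_one_div_add_atTop_nhds_zero_nat ws hws).eventually hev
      obtain ⟨k, h2, h3⟩ := (h1.and (hw b hb1)).exists
      exact lt_asymm h2 h3
    · unfold subderiv2
      rw [le_liminf_iff]
      exact fun y hy => L H y hy
  refine ⟨⟨⟨EReal.coe_ne_top _, EReal.coe_ne_bot _⟩, ?_⟩, heq⟩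
  intro t htp ht0 H
  obtain ⟨ws, hws, hw⟩ := Uq H t htp ht0
  refine ⟨ws, hws, ?_⟩
  rw [heq H, tendsto_order]
  exact ⟨fun b hb => (hseq H t htp ht0 ws hws).eventually (L H b hb), fun b hb => hw b hb⟩

lemma exists_decomp {n : ℕ} (X Y : Sym n) (μ : ℝ) (htr : Y.val.trace = 1)
    (hpsd : ∀ v, 0 ≤ v ⬝ᵥ (Y.val *ᵥ v)) (hXY : X.val * Y.val = μ • Y.val) :
    ∃ (y : Fin n → ℝ) (v : Fin n → Fin n → ℝ), (∀ j, 0 ≤ y j) ∧ ∑ j, y j = 1 ∧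
      (∀ j, v j ⬝ᵥ v j = 1) ∧ (∀ j, y j ≠ 0 → X.val *ᵥ v j = μ • v j) ∧
      ∀ M : Matrix (Fin n) (Fin n) ℝ, (Y.val * M).trace = ∑ j, y j * (v j ⬝ᵥ (M *ᵥ v j)) := by
  obtain ⟨V, hV, hV', hY⟩ := exists_eig Y.val Y.property
  set y := eigval Y.val with hy
  have hYv : ∀ j, Y.val *ᵥ (V *ᵥ Pi.single j 1) = y j • (V *ᵥ Pi.single j 1) := by
    intro j
    have := conj_mulVec hV y (Pi.single j 1)
    rw [← hY] at this
    rw [this, ← Matrix.mulVec_smul]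
    congr 1; ext k
    by_cases h : k = j
    · subst h; simp
    · simp [h]
  have hnorm : ∀ j, (V *ᵥ Pi.single j 1) ⬝ᵥ (V *ᵥ Pi.single j 1) = 1 := by
    intro j
    rw [norm_eig hV]
    simp [Pi.single_apply]
  have htrM : ∀ M : Matrix (Fin n) (Fin n) ℝ, (Y.val * M).trace
      = ∑ j, y j * ((V *ᵥ Pi.single j 1) ⬝ᵥ (M *ᵥ (V *ᵥ Pi.single j 1))) := by
    intro M
    have e : (Y.val * M).trace = (Matrix.diagonal y * (Vᵀ * (M * V))).trace := by
      conv_lhs => rw [hY]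
      rw [Matrix.mul_assoc, Matrix.mul_assoc, Matrix.trace_mul_comm]
      simp only [Matrix.mul_assoc]
    rw [e]
    simp only [Matrix.trace, Matrix.diag, Matrix.diagonal_mul]
    refine Finset.sum_congr rfl fun j _ => ?_
    congr 1
    rw [Matrix.mulVec_mulVec, Matrix.mulVec_single_one, Matrix.mulVec_single_one, Matrix.mul_apply']
    rfl
  refine ⟨y, fun j => V *ᵥ Pi.single j 1, ?_, ?_, hnorm, ?_, htrM⟩
  · intro j
    have := hpsd (V *ᵥ Pi.single j 1)
    rw [hYv, dotProduct_smul, hnorm] at this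
    simpa using this
  · have := htrM 1
    rw [Matrix.mul_one, htr] at this
    rw [this]
    refine Finset.sum_congr rfl fun j _ => ?_
    rw [Matrix.one_mulVec, hnorm, mul_one]
  · intro j hj
    have h1 : X.val *ᵥ (Y.val *ᵥ (V *ᵥ Pi.single j 1)) = μ • (Y.val *ᵥ (V *ᵥ Pi.single j 1)) := by
      rw [Matrix.mulVec_mulVec, hXY, Matrix.smul_mulVec]
    rw [hYv, Matrix.mulVec_smul, smul_comm] at h1
    exact smul_right_injective _ hj h1

open scoped Classical in
theorem leading_aux {n : ℕ} (X : Sym n) (i : Fin n)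
    (hlead : ∀ j : Fin n, j < i → eigval X.val i < eigval X.val j) (Y : Sym n)
    (hY : LimSubgrad ipM (fun A : Sym n => ((eigval A.val i : ℝ) : EReal)) X Y) :
    TwiceEpiDiff ipM (fun A : Sym n => ((eigval A.val i : ℝ) : EReal)) X Y ∧
      ∀ H : Sym n, subderiv2 ipM (fun A : Sym n => ((eigval A.val i : ℝ) : EReal)) X Y H =
          (if H ∈ criticalCone ipM (fun A : Sym n => ((eigval A.val i : ℝ) : EReal)) X Y
            then (0 : EReal) else (⊤ : EReal))
          + ((2 * (Y.val * (H.val * pinv (eigval X.val i • (1 : Matrix (Fin n) (Fin n) ℝ) - X.val)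
            * H.val)).trace : ℝ) : EReal) := by
  obtain ⟨htr, hpsd, hYX⟩ := lim_props i X Y hY
  obtain ⟨P, E, hPfix, hlow, hupp⟩ := core X i hlead
  set μ := eigval X.val i with hμ
  set G := pinv (μ • (1 : Matrix (Fin n) (Fin n) ℝ) - X.val) with hG
  have hXs : X.val.IsSymm := X.property
  have hYs : Y.val.IsSymm := Y.property
  have hXY : X.val * Y.val = μ • Y.val := by
    have := congrArg Matrix.transpose hYX
    rwa [Matrix.transpose_mul, Matrix.transpose_smul, hXs, hYs] at this
  have hPY : P * Y.val = Y.val := by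
    have h1 : ∀ x, (P * Y.val) *ᵥ x = Y.val *ᵥ x := by
      intro x
      rw [← Matrix.mulVec_mulVec]
      apply hPfix
      rw [Matrix.mulVec_mulVec, hXY, Matrix.smul_mulVec]
    exact Matrix.mulVec_injective (funext h1)
  have hYP : Y.val * P = Y.val := by
    have := congrArg Matrix.transpose hPY
    rwa [Matrix.transpose_mul, E.Ps, hYs] at this
  obtain ⟨y, v, hy0, hy1, hv1, hvX, hdec⟩ := exists_decomp X Y μ htr hpsd hXY
  have hcval : Continuous fun H : Sym n => H.val := continuous_subtype_val
  have hcG : Continuous fun H : Sym n => H.val * G * H.val :=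
    (hcval.matrix_mul continuous_const).matrix_mul hcval
  refine main_abs (fun A => eigval A.val i) X Y
    (fun H => (Y.val * (H.val * G * H.val)).trace) ?_ ?_ ?_
  · exact Continuous.matrix_trace (continuous_const.matrix_mul hcG)
  · intro H ε hε
    have hall : ∀ᶠ p : ℝ × Sym n in 𝓝[>] (0:ℝ) ×ˢ 𝓝 H, ∀ j, y j ≠ 0 →
        μ + p.1 * (v j ⬝ᵥ (p.2.val *ᵥ v j)) + p.1 ^ 2 * (v j ⬝ᵥ ((p.2.val * G * p.2.val) *ᵥ v j))
          - ε * p.1 ^ 2 ≤ eigval (X.val + p.1 • p.2.val) i := by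
      rw [eventually_all]
      intro j
      by_cases hj : y j = 0
      · exact Eventually.of_forall fun p h => absurd hj h
      · filter_upwards [hlow (v j) (hPfix _ (hvX j hj)) (hv1 j) H ε hε] with p hp _ using hp
    filter_upwards [hall] with p hp
    have hsum : ∑ j, y j * (μ + p.1 * (v j ⬝ᵥ (p.2.val *ᵥ v j))
        + p.1 ^ 2 * (v j ⬝ᵥ ((p.2.val * G * p.2.val) *ᵥ v j)) - ε * p.1 ^ 2)
        ≤ ∑ j, y j * eigval (X.val + p.1 • p.2.val) i := by
      refine Finset.sum_le_sum fun j _ => ?_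
      by_cases hj : y j = 0
      · simp [hj]
      · exact mul_le_mul_of_nonneg_left (hp j hj) (hy0 j)
    rw [← Finset.sum_mul, hy1, one_mul] at hsum
    refine le_trans (le_of_eq ?_) hsum
    rw [ipM, hdec, hdec]
    have : ∀ j, y j * (μ + p.1 * (v j ⬝ᵥ (p.2.val *ᵥ v j))
        + p.1 ^ 2 * (v j ⬝ᵥ ((p.2.val * G * p.2.val) *ᵥ v j)) - ε * p.1 ^ 2)
        = p.1 * (y j * (v j ⬝ᵥ (p.2.val *ᵥ v j)))
        + p.1 ^ 2 * (y j * (v j ⬝ᵥ ((p.2.val * G * p.2.val) *ᵥ v j)))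
        + y j * (μ - ε * p.1 ^ 2) := fun j => by ring
    rw [Finset.sum_congr rfl fun j _ => this j, Finset.sum_add_distrib, Finset.sum_add_distrib,
      ← Finset.mul_sum, ← Finset.mul_sum, ← Finset.sum_mul, hy1]
    ring
  · intro H hH
    have hHs : H.val.IsSymm := H.property
    have hcrit : ∀ u, P *ᵥ u = u → u ⬝ᵥ (H.val *ᵥ u) ≤ ipM Y H * (u ⬝ᵥ u) := by
      have hunit : ∀ u, P *ᵥ u = u → u ⬝ᵥ u = 1 → u ⬝ᵥ (H.val *ᵥ u) ≤ ipM Y H := by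
        intro u hu hu1
        have h1 := subderiv_ge (fun A : Sym n => eigval A.val i) X H
          (fun H => u ⬝ᵥ (H.val *ᵥ u)) (fun H => u ⬝ᵥ ((H.val * G * H.val) *ᵥ u))
          (Continuous.dotProduct continuous_const (hcval.matrix_mulVec continuous_const))
          (Continuous.dotProduct continuous_const (hcG.matrix_mulVec continuous_const))
          (hlow u hu hu1 H 1 one_pos)
        have hH' : subderiv (fun A : Sym n => ((eigval A.val i : ℝ) : EReal)) X H
          = ((ipM Y H : ℝ) : EReal) := hH
        rw [hH'] at h1
        exact_mod_cast h1
      intro u hu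
      by_cases h0 : u = 0
      · simp [h0]
      have hpos : 0 < u ⬝ᵥ u :=
        lt_of_le_of_ne (dot_nonneg u) fun h => h0 (dotProduct_self_eq_zero.mp h.symm)
      set r := Real.sqrt (u ⬝ᵥ u) with hr
      have hrpos : 0 < r := Real.sqrt_pos.mpr hpos
      have hr2 : r * r = u ⬝ᵥ u := Real.mul_self_sqrt hpos.le
      have h1 := hunit (r⁻¹ • u) (by rw [Matrix.mulVec_smul, hu]) (by
        rw [smul_dotProduct, dotProduct_smul, ← hr2, smul_eq_mul, smul_eq_mul]
        field_simp)
      rw [Matrix.mulVec_smul, smul_dotProduct, dotProduct_smul, smul_eq_mul, smul_eq_mul,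
        ← mul_assoc, ← mul_inv, hr2, inv_mul_eq_div, div_le_iff₀ hpos] at h1
      exact h1
    have hKs : (P * (H.val * G * H.val) * P).IsSymm := by
      have h1 := E.Ps; have h2 := E.Gs
      unfold Matrix.IsSymm at *
      simp only [Matrix.transpose_mul, h1, h2, hHs, Matrix.mul_assoc]
    refine ⟨⟨P * (H.val * G * H.val) * P, hKs⟩, ?_, ?_⟩
    · simp only [ipM]
      rw [← Matrix.mul_assoc, ← Matrix.mul_assoc, hYP, Matrix.trace_mul_comm, ← Matrix.mul_assoc,
        hPY]
    · intro ε hε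
      exact hupp H (ipM Y H) hcrit ε hε

open scoped Classical in
/-- Theorem 5.3: a leading eigenvalue function is twice epi-differentiable,
with second subderivative `δ_{C}(H) + 2⟨Y, H (μ I - X)† H⟩`. -/
theorem leading_eigenvalue_twice_epi_diff {n : ℕ} (X : Sym n) (i : Fin n)
    (hlead : ∀ j : Fin n, j < i → eigval X.val i < eigval X.val j) :
    ∀ Y : Sym n, LimSubgrad ipM (fun A : Sym n => ((eigval A.val i : ℝ) : EReal)) X Y →
      TwiceEpiDiff ipM (fun A : Sym n => ((eigval A.val i : ℝ) : EReal)) X Y ∧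
      ∀ H : Sym n,
        subderiv2 ipM (fun A : Sym n => ((eigval A.val i : ℝ) : EReal)) X Y H =
          (if H ∈ criticalCone ipM (fun A : Sym n => ((eigval A.val i : ℝ) : EReal)) X Y
            then (0 : EReal) else (⊤ : EReal))
          + ((2 * (Y.val * (H.val *
              pinv (eigval X.val i • (1 : Matrix (Fin n) (Fin n) ℝ) - X.val) * H.val)).trace
              : ℝ) : EReal) := by
  
  intro Y hY
  exact leading_aux X i hlead Y hY

end SpecPaper
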